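/- arXiv:1409.6714 — 2 statements merged into one kernel-verified Lean document; each statement's English description precedes it below -/
import Mathlib

section
/- Let 0 < α ≤ 1, 1 ≤ p ≤ ∞, d ∈ ℕ, and let F_{α,p,d} be the set of continuous functions f : ℝ^d → ℝ that are 1-periodic in each variable and satisfy Σ_{k ∈ ℤ^d} | f̂(k) | + sup_{x ∈ ℝ^d, h ≠ 0} |f(x+h) − f(x)| / ‖h‖_p^α ≤ 1, where f̂(k) = ∫_{[0,1]^d} f(x) e^{−2πi k·x} dx are the Fourier coefficients and ‖h‖_p is the ℓ_p norm on ℝ^d. Then for every prime number n, the quasi-Monte Carlo rule Q_n(f) = (1/n) Σ_{k=0}^{n−1} f( {k/n}, {k²/n}, …, {k^d/n} ) (with {·} the fractional part) satisfies sup_{f ∈ F_{α,p,d}} | ∫_{[0,1]^d} f(x) dx − Q_n(f) | ≤ max( (d−1)/√n , d^{α/p}/n^α ). -/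
/-!
Write `A = ∑ |f̂(k)|`, let `L` be the Hölder constant, and let `G_n` be the average of `f` over the
full grid `{0, 1/n, …, (n-1)/n}^d`. The error of the rule `Q_n` is at most
`|∫ f - G_n| + |G_n - Q_n|`, and the two terms are bounded by `L d^{α/p} / n^α` and `A (d-1) / √n`;
as `A + L ≤ 1`, their sum is at most the maximum of the two rates.

The first bound (`abs_integral_sub_gridAvg_le`) averages `f` over the translates by grid points: this
preserves the integral and gives a function periodic with respect to `(1/n)ℤ^d`. The second one
(`abs_curveAvg_sub_gridAvg_le`) expands `f` into its Fourier series. On the exponential with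
frequency `k` both averages equal `1` if `n ∣ k`; otherwise the grid average is `0` and the curve
average is a complete exponential sum `(1/n) ∑_x ψ(k_1 x + ⋯ + k_d x^d)` over `ℤ/n`, bounded by Weil.
The prime `n = 2`, to which the proof of Weil's bound below does not apply, is handled directly by
Hölder continuity.

Weil's bound `|∑_x ψ(g(x))| ≤ (deg g - 1) √p`, for `1 ≤ deg g < p` and `p` odd
(`norm_sum_addChar_eval_le`), is proved in three steps.

* Stepanov's method (`stepanov_bound`, `norm_expSum_le`) gives `O(p ^ a)` for the exponential sum
  over the field with `p ^ (2a)` elements, with an implied constant independent of `a`.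
* The `L`-function `∑_h ψ(∑_{h(θ) = 0} g(θ)) t^{deg h}`, summed over monic `h`, is a polynomial of
  degree less than `deg g` (`lCoeff_eq_zero`). By its Euler product (`lCoeff_newton`) and by grouping
  the elements of an extension field according to minimal polynomials (`expSum_eq_primePowerSum`),
  the exponential sums over all extensions are, up to sign, the power sums of its reciprocal roots
  (`exists_primePowerSum_eq`).
* Power sums which are `O(p ^ a)` in the even degrees `2a` force the reciprocal roots to have modulus
  at most `√p` (`norm_le_of_norm_powerSum_le`).
-/

open MeasureTheory Set
open scoped ENNReal

/-- The `k`-th Fourier coefficient of a (1-periodic) function `f` on `[0,1]^d`. -/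
noncomputable def fourierCoeffCube {d : ℕ} (f : (Fin d → ℝ) → ℝ) (k : Fin d → ℤ) : ℂ :=
  ∫ x in Set.Icc (0 : Fin d → ℝ) 1,
    (f x : ℂ) * Complex.exp (-(2 * (Real.pi : ℂ) * Complex.I) * ∑ j, (k j : ℂ) * (x j : ℂ))

section Weil

open Polynomial

/-! ### Stepanov's method -/

theorem natDegree_sum_frobenius {K : Type*} [Field K] {p : ℕ} (hp : 1 < p) (G : K[X])
    (hD : 1 ≤ G.natDegree) (b : ℕ) :
    (∑ i ∈ Finset.range (b + 1), G ^ p ^ i).natDegree = G.natDegree * p ^ b := by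
  induction b with
  | zero => simp
  | succ b ih =>
    rw [Finset.sum_range_succ, natDegree_add_eq_right_of_natDegree_lt, natDegree_pow, mul_comm]
    rw [ih, natDegree_pow, mul_comm]
    have : p ^ b < p ^ (b + 1) := Nat.pow_lt_pow_right hp (by omega)
    exact Nat.mul_lt_mul_of_pos_right this (by omega)

/-- Stepanov's method. If `|K| = Q²` with `Q = p ^ (b + 1)`, the equation `Tr (G x) = c` has at most
`Q (p ^ b + 2D + 2)` solutions in `K`, where `D = deg G` and the trace to the prime field is written as a sum of
Frobenius powers. With `z = ∑_{i ≤ b} G ^ (p ^ i)`, a solution satisfies `z(x) ^ Q = c - z(x)`, while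
`x ^ (Q²) = x`; hence if `P = ∑ w_t ^ Q X ^ (s + iQ) z ^ j`, then `P(x) ^ Q` equals the value at `x` of
`∑ w_t X ^ (sQ + i) (c - z) ^ j`. Dimension counting gives `w ≠ 0` for which the latter polynomial
vanishes identically, so that all solutions are roots of `P`; and `P ≠ 0` because its terms have
pairwise distinct degrees. -/
theorem stepanov_bound {p : ℕ} [Fact p.Prime] (hp3 : 3 ≤ p) {K : Type*} [Field K] [Fintype K]
    [DecidableEq K] [CharP K p] (b : ℕ) (hK : Fintype.card K = p ^ (2 * (b + 1))) (G : K[X])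
    (hD1 : 1 ≤ G.natDegree) (hDp : G.natDegree < p) (c : K) :
    (Finset.univ.filter fun x : K =>
      ∑ i ∈ Finset.range (2 * (b + 1)), (G.eval x) ^ p ^ i = c).card
      ≤ p ^ (b + 1) * (p ^ b + 2 * G.natDegree + 2) := by
  classical
  set D := G.natDegree with hD
  set r := p ^ b with hr
  have hQr : p ^ (b + 1) = p * r := by rw [hr]; ring
  set Q := p ^ (b + 1) with hQ
  set I := r + D + 2 with hI
  have hrpos : 0 < r := by rw [hr]; positivity
  have hpprime : p.Prime := Fact.out
  set z : K[X] := ∑ i ∈ Finset.range (b + 1), G ^ p ^ i with hz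
  have hzdeg : z.natDegree = D * r := natDegree_sum_frobenius (by omega) G hD1 b
  have hz0 : z ≠ 0 := by
    intro h
    rw [h, natDegree_zero] at hzdeg
    have : 0 < D * r := by positivity
    omega
  let N := r * Q + I + D * Q
  -- one unknown `w t` for each `t = (i, j, s)`
  let ι := Fin I × Fin p × Fin r
  let T : ι → K[X] := fun t => X ^ ((t.2.2 : ℕ) * Q + (t.1 : ℕ)) * (C c - z) ^ (t.2.1 : ℕ)
  have hTdeg : ∀ t, (T t).degree < (N : ℕ) := by
    rintro ⟨i, j, s⟩
    have h1 : (T (i, j, s)).natDegree ≤ (s * Q + i) + j * (D * r) := by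
      refine natDegree_mul_le.trans (add_le_add (natDegree_X_pow _).le ?_)
      refine natDegree_pow_le.trans (Nat.mul_le_mul_left _ ?_)
      refine (natDegree_sub_le _ _).trans ?_
      simp [hzdeg]
    have h2 : (s : ℕ) * Q ≤ r * Q := Nat.mul_le_mul_right _ s.2.le
    have h3 : (j : ℕ) * (D * r) ≤ D * Q := by
      rw [hQr]
      calc (j : ℕ) * (D * r) ≤ p * (D * r) := Nat.mul_le_mul_right _ j.2.le
        _ = _ := by ring
    have h4 := i.2
    refine lt_of_le_of_lt degree_le_natDegree ?_
    exact_mod_cast (by omega : (T (i, j, s)).natDegree < r * Q + I + D * Q)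
  let φ : (ι → K) →ₗ[K] degreeLT K N :=
    Fintype.linearCombination K (fun t => (⟨T t, mem_degreeLT.2 (hTdeg t)⟩ : degreeLT K N))
  have hfin : Module.finrank K (degreeLT K N) < Module.finrank K (ι → K) := by
    rw [(degreeLTEquiv K N).finrank_eq, Module.finrank_fin_fun, Module.finrank_fintype_fun_eq_card]
    simp only [ι, Fintype.card_prod, Fintype.card_fin, N, hI]
    rw [hQr]
    have h1 : D + 1 ≤ p := hDp
    nlinarith [Nat.mul_le_mul hp3 (Nat.le_refl r), Nat.mul_le_mul h1 hrpos]
  have : FiniteDimensional K (degreeLT K N) := (degreeLTEquiv K N).symm.finiteDimensional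
  obtain ⟨w, hwker, hw0⟩ := (Submodule.ne_bot_iff _).1 (LinearMap.ker_ne_bot_of_finrank_lt (f := φ) hfin)
  have hw : ∑ t, C (w t) * T t = 0 := by
    have := congrArg Subtype.val (LinearMap.mem_ker.1 hwker)
    simp only [φ, Fintype.linearCombination_apply] at this
    simpa [smul_eq_C_mul] using this
  let U : ι → K[X] := fun t => C (w t ^ Q) * (X ^ ((t.2.2 : ℕ) + (t.1 : ℕ) * Q) * z ^ (t.2.1 : ℕ))
  have hUdeg : ∀ t, U t ≠ 0 → (U t).natDegree = t.2.2 + r * (p * t.1 + D * t.2.1) := by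
    intro t ht
    have hwt : w t ^ Q ≠ 0 := by
      intro h
      exact ht (by simp only [U, h, C_0, zero_mul])
    rw [natDegree_C_mul hwt, natDegree_mul (by simp) (pow_ne_zero _ hz0), natDegree_X_pow,
      natDegree_pow, hzdeg, hQr]
    ring
  have hcop : Nat.Coprime p D :=
    (Nat.Prime.coprime_iff_not_dvd hpprime).2 (Nat.not_dvd_of_pos_of_lt hD1 hDp)
  -- the degrees `s + r (p i + D j)` with `s < r`, `j < p` are pairwise distinct
  have hinj : ∀ t t' : ι, (t.2.2 : ℕ) + r * (p * t.1 + D * t.2.1)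
      = t'.2.2 + r * (p * t'.1 + D * t'.2.1) → t = t' := by
    rintro ⟨i, j, s⟩ ⟨i', j', s'⟩ h
    simp only at h
    have hs : (s : ℕ) = s' := by
      have := congrArg (· % r) h
      simpa [Nat.add_mul_mod_self_left, Nat.mod_eq_of_lt s.2, Nat.mod_eq_of_lt s'.2] using this
    have hm : p * (i : ℕ) + D * j = p * i' + D * j' := by
      rw [hs] at h
      exact Nat.eq_of_mul_eq_mul_left hrpos (Nat.add_left_cancel h)
    have hj : (j : ℕ) = j' := by
      have h1 : D * (j : ℕ) ≡ D * j' [MOD p] := by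
        have := congrArg (· % p) hm
        rw [Nat.ModEq]; simpa [Nat.mul_add_mod] using this
      have h2 := Nat.ModEq.cancel_left_of_coprime hcop h1
      exact Nat.ModEq.eq_of_lt_of_lt h2 j.2 j'.2
    have hi : (i : ℕ) = i' := by
      rw [hj] at hm
      exact Nat.eq_of_mul_eq_mul_left hpprime.pos (Nat.add_right_cancel hm)
    ext <;> simp [hs, hj, hi]
  let P : K[X] := ∑ t, U t
  have hP0 : P ≠ 0 := by
    intro hP
    have hdis := degree_sum_eq_of_disjoint U Finset.univ (by
      rintro t ⟨-, ht⟩ t' ⟨-, ht'⟩ hne h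
      apply hne
      apply hinj
      rw [← hUdeg t ht, ← hUdeg t' ht']
      exact natDegree_eq_of_degree_eq h)
    rw [show Finset.univ.sum U = 0 from hP, degree_zero] at hdis
    apply hw0
    ext t
    have h1 : (U t).degree ≤ ⊥ := by
      rw [hdis]
      exact Finset.le_sup (f := fun i => (U i).degree) (Finset.mem_univ t)
    have h2 : U t = 0 := degree_eq_bot.1 (le_bot_iff.1 h1)
    simp only [U, mul_eq_zero, C_eq_zero] at h2
    rcases h2 with h2 | h2 | h2
    · exact pow_eq_zero_iff (by positivity) |>.1 h2
    · exact absurd h2 (by simp)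
    · exact absurd h2 (pow_ne_zero _ hz0)
  have hPdeg : P.natDegree ≤ Q * (r + 2 * D + 2) := by
    refine natDegree_sum_le_of_forall_le _ _ fun t _ => ?_
    by_cases ht : U t = 0
    · simp [ht]
    rw [hUdeg t ht]
    have h1 := t.2.2.2
    have h2 : (t.1 : ℕ) + 1 ≤ r + D + 2 := t.1.2
    have h3 : (t.2.1 : ℕ) + 1 ≤ p := t.2.1.2
    have h4 := Nat.mul_le_mul_left (r * p) h2
    have h5 := Nat.mul_le_mul_left (r * D) h3
    rw [hQr]
    nlinarith [Nat.mul_le_mul_left r hp3]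
  refine (card_le_degree_of_subset_roots (p := P) ?_).trans hPdeg
  intro x hx
  rw [mem_roots hP0, IsRoot]
  have hx' : ∑ i ∈ Finset.range (2 * (b + 1)), (G.eval x) ^ p ^ i = c := by simpa using hx
  have hzx : z.eval x ^ Q = c - z.eval x := by
    have h1 : z.eval x = ∑ i ∈ Finset.range (b + 1), (G.eval x) ^ p ^ i := by
      simp [hz, eval_finsetSum]
    rw [two_mul, Finset.sum_range_add] at hx'
    rw [eq_sub_iff_add_eq', ← hx', h1, hQ, sum_pow_char_pow]
    congr 1
    refine Finset.sum_congr rfl fun i _ => ?_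
    rw [← pow_mul, ← pow_add, add_comm]
  have hxq : ∀ y : K, (y ^ Q) ^ Q = y := by
    intro y
    rw [← pow_mul, hQ, ← pow_add, ← two_mul, ← hK, FiniteField.pow_card]
  have hPQ : P.eval x ^ Q = 0 := by
    have h0 := congrArg (eval x) hw
    rw [eval_finsetSum, eval_zero] at h0
    rw [← h0]
    simp only [P, eval_finsetSum]
    rw [hQ, sum_pow_char_pow, ← hQ]
    refine Finset.sum_congr rfl fun t _ => ?_
    simp only [U, T, eval_mul, eval_C, eval_pow, eval_X, eval_sub, mul_pow]
    rw [hxq, ← hzx, ← pow_mul (x), add_mul, pow_add, pow_add, mul_assoc _ Q Q, mul_comm _ (Q * Q),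
      pow_mul x (Q * Q), pow_mul x Q Q, hxq, ← pow_mul, ← pow_mul, mul_comm Q]
  exact pow_eq_zero_iff (by positivity) |>.1 hPQ

/-- The exponential sum `∑_{x ∈ K} ψ (Tr (g x))` over a finite extension `K` of `ℤ/p`. -/
noncomputable def expSum {p : ℕ} [Fact p.Prime] (ψ : AddChar (ZMod p) ℂ) (g : (ZMod p)[X])
    (K : Type*) [Field K] [Fintype K] [Algebra (ZMod p) K] : ℂ :=
  ∑ x : K, ψ (Algebra.trace (ZMod p) K (aeval x g))

/-- Square-root cancellation with a bad constant, over extensions of even degree. As the values of a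
nontrivial `ψ` add up to `0`, the uniform upper bound of `stepanov_bound` may be subtracted from
the size of every fibre of `x ↦ Tr (g x)`; the resulting coefficients have constant sign, so their
absolute values add up exactly. No lower bound for the fibres is needed. -/
theorem norm_expSum_le {p : ℕ} [Fact p.Prime] (hp3 : 3 ≤ p) (ψ : AddChar (ZMod p) ℂ) (hψ : ψ ≠ 1)
    (g : (ZMod p)[X]) (hD1 : 1 ≤ g.natDegree) (hDp : g.natDegree < p)
    (K : Type*) [Field K] [Fintype K] [Algebra (ZMod p) K] (b : ℕ)
    (hK : Module.finrank (ZMod p) K = 2 * (b + 1)) :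
    ‖expSum ψ g K‖ ≤ (p * (2 * g.natDegree + 2) : ℝ) * (p : ℝ) ^ (b + 1) := by
  classical
  have : CharP K p := charP_of_injective_algebraMap (algebraMap (ZMod p) K).injective p
  have hcard : Fintype.card K = p ^ (2 * (b + 1)) := by
    rw [← hK, Module.card_eq_pow_finrank (K := ZMod p), ZMod.card]
  let M : ZMod p → ℕ := fun c =>
    (Finset.univ.filter fun x : K => Algebra.trace (ZMod p) K (aeval x g) = c).card
  let B : ℕ := p ^ (b + 1) * (p ^ b + 2 * g.natDegree + 2)
  have hM : ∀ c, M c ≤ B := by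
    intro c
    have h := stepanov_bound hp3 b hcard (g.map (algebraMap (ZMod p) K)) (by simpa using hD1)
      (by simpa using hDp) (algebraMap (ZMod p) K c)
    rw [natDegree_map] at h
    refine le_trans (Finset.card_le_card fun x => ?_) h
    simp only [Finset.mem_filter, Finset.mem_univ, true_and]
    rw [← (algebraMap (ZMod p) K).injective.eq_iff, FiniteField.algebraMap_trace_eq_sum_pow, hK,
      Nat.card_zmod, eval_map_algebraMap]
    exact id
  have hsumM : ∑ c, (M c : ℝ) = (p : ℝ) ^ (2 * (b + 1)) := by
    have := Finset.card_eq_sum_card_fiberwise (s := (Finset.univ : Finset K)) (t := Finset.univ)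
      (f := fun x => Algebra.trace (ZMod p) K (aeval x g)) (fun _ _ => by simp)
    rw [Finset.card_univ, hcard] at this
    exact_mod_cast this.symm
  have hS : expSum ψ g K = ∑ c, ((M c : ℂ) - B) * ψ c := by
    simp_rw [sub_mul]
    rw [Finset.sum_sub_distrib, ← Finset.mul_sum, AddChar.sum_eq_zero_of_ne_one hψ, mul_zero, sub_zero,
      expSum, ← Finset.sum_fiberwise (s := Finset.univ) (g := fun x : K => Algebra.trace (ZMod p) K (aeval x g))]
    refine Finset.sum_congr rfl fun c _ => ?_
    rw [Finset.sum_congr rfl (g := fun _ => ψ c)]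
    · simp [M]
    · intro x hx
      rw [(Finset.mem_filter.1 hx).2]
  rw [hS]
  calc ‖∑ c, ((M c : ℂ) - B) * ψ c‖ ≤ ∑ c, ((B : ℝ) - M c) := by
        refine norm_sum_le_of_le _ fun c _ => ?_
        rw [norm_mul, AddChar.norm_apply, mul_one, norm_sub_rev]
        have : (M c : ℝ) ≤ B := by exact_mod_cast hM c
        rw [show (B : ℂ) - M c = ((B - M c : ℝ) : ℂ) by push_cast; rfl, Complex.norm_real,
          Real.norm_of_nonneg (by linarith)]
    _ = _ := by
        rw [Finset.sum_sub_distrib, hsumM]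
        simp [B, ZMod.card]
        ring

/-! ### Power sums of the roots of a polynomial -/

/-- The generating series of the power sums of the roots of `h`: the logarithmic derivative
`-t r'(t) / r(t)` of the reversed polynomial `r`. For `h = ∏ (X - θ_i)` its coefficient at `t ^ k` is
`∑ θ_i ^ k` when `k ≥ 1`, and `0` when `k = 0`. -/
noncomputable def powerSumSeries {F : Type*} [Field F] (h : F[X]) : PowerSeries F :=
  -(PowerSeries.X * PowerSeries.derivative F (h.reverse : PowerSeries F)) *
    (h.reverse : PowerSeries F)⁻¹

theorem constantCoeff_reverse_ne_zero {F : Type*} [Field F] {h : F[X]} (hh : h ≠ 0) :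
    PowerSeries.constantCoeff (h.reverse : PowerSeries F) ≠ 0 := by
  rw [← PowerSeries.coeff_zero_eq_constantCoeff_apply, Polynomial.coeff_coe, coeff_zero_reverse]
  exact leadingCoeff_ne_zero.2 hh

theorem eq_powerSumSeries_iff {F : Type*} [Field F] {h : F[X]} (hh : h ≠ 0) (s : PowerSeries F) :
    s = powerSumSeries h ↔ s * (h.reverse : PowerSeries F) =
      -(PowerSeries.X * PowerSeries.derivative F (h.reverse : PowerSeries F)) :=
  PowerSeries.eq_mul_inv_iff_mul_eq (constantCoeff_reverse_ne_zero hh)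

theorem powerSumSeries_mul_reverse {F : Type*} [Field F] {h : F[X]} (hh : h ≠ 0) :
    powerSumSeries h * (h.reverse : PowerSeries F) =
      -(PowerSeries.X * PowerSeries.derivative F (h.reverse : PowerSeries F)) :=
  (eq_powerSumSeries_iff hh _).1 rfl

theorem powerSumSeries_one {F : Type*} [Field F] : powerSumSeries (1 : F[X]) = 0 := by
  have : (1 : F[X]).reverse = 1 := by simpa using reverse_C (1 : F)
  simp [powerSumSeries, this]

theorem powerSumSeries_mul {F : Type*} [Field F] {h₁ h₂ : F[X]} (hh₁ : h₁ ≠ 0) (hh₂ : h₂ ≠ 0) :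
    powerSumSeries (h₁ * h₂) = powerSumSeries h₁ + powerSumSeries h₂ := by
  symm
  rw [eq_powerSumSeries_iff (mul_ne_zero hh₁ hh₂), reverse_mul_of_domain, Polynomial.coe_mul,
    Derivation.leibniz, smul_eq_mul, smul_eq_mul]
  linear_combination (h₂.reverse : PowerSeries F) * powerSumSeries_mul_reverse hh₁ +
    (h₁.reverse : PowerSeries F) * powerSumSeries_mul_reverse hh₂

theorem powerSumSeries_map {F K : Type*} [Field F] [Field K] (φ : F →+* K) {h : F[X]}
    (hh : h ≠ 0) : powerSumSeries (h.map φ) = (powerSumSeries h).map φ := by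
  symm
  have hrev : ((h.map φ).reverse : PowerSeries K) = (h.reverse : PowerSeries F).map φ := by
    rw [reverse, reverse, natDegree_map, reflect_map, Polynomial.polynomial_map_coe]
  rw [eq_powerSumSeries_iff ((Polynomial.map_ne_zero_iff φ.injective).2 hh), hrev, ← map_mul,
    powerSumSeries_mul_reverse hh]
  ext n
  rcases n with _ | n
  · simp
  · simp [PowerSeries.coeff_succ_X_mul, PowerSeries.coeff_derivative]

theorem coeff_powerSumSeries_X_sub_C {K : Type*} [Field K] (θ : K) {k : ℕ} (hk : k ≠ 0) :
    PowerSeries.coeff k (powerSumSeries (X - C θ)) = θ ^ k := by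
  have hrev : ((X - C θ).reverse : PowerSeries K) = 1 - PowerSeries.C θ * PowerSeries.X := by
    rw [reverse, natDegree_X_sub_C, reflect_sub, reflect_one_X, reflect_C]
    simp
  have hs : PowerSeries.mk (fun k => if k = 0 then 0 else θ ^ k) = powerSumSeries (X - C θ) := by
    rw [eq_powerSumSeries_iff (X_sub_C_ne_zero θ), hrev]
    ext n
    rcases n with _ | _ | n
    · simp
    · simp [mul_sub, ← mul_assoc, PowerSeries.coeff_succ_mul_X]
    · simp [mul_sub, ← mul_assoc, PowerSeries.coeff_succ_mul_X, PowerSeries.coeff_X]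
      ring
  rw [← hs, PowerSeries.coeff_mk, if_neg hk]

/-- Adding `b` to the coefficient of `h` at distance `D` from the top changes the `D`-th power sum of
the roots by `-D b` and leaves the lower power sums unchanged. -/
theorem powerSumSeries_add_C_mul_X_pow {F : Type*} [Field F] {h : F[X]} (hh : h.Monic) {D : ℕ}
    (hD : 1 ≤ D) (hDn : D ≤ h.natDegree) (b : F) {k : ℕ} (hk : k ≤ D) :
    PowerSeries.coeff k (powerSumSeries (h + C b * X ^ (h.natDegree - D))) =
      PowerSeries.coeff k (powerSumSeries h) - if k = D then D * b else 0 := by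
  set h' := h + C b * X ^ (h.natDegree - D) with hh'
  have hlt : (C b * X ^ (h.natDegree - D)).degree < h.degree := by
    refine lt_of_le_of_lt (degree_C_mul_X_pow_le _ _) ?_
    rw [degree_eq_natDegree hh.ne_zero]
    exact_mod_cast (by omega : h.natDegree - D < h.natDegree)
  have hm : h'.Monic := hh.add_of_left hlt
  have hn : h'.natDegree = h.natDegree := natDegree_eq_of_degree_eq (degree_add_eq_left_of_degree_lt hlt)
  have hrev : (h'.reverse : PowerSeries F) =
      (h.reverse : PowerSeries F) + PowerSeries.C b * PowerSeries.X ^ D := by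
    rw [reverse, hn, hh', reflect_add, reflect_C_mul_X_pow, revAt_le (by omega),
      Nat.sub_sub_self hDn, reverse]
    simp
  set r : PowerSeries F := (h.reverse : PowerSeries F) with hr
  have e1 := powerSumSeries_mul_reverse hm.ne_zero
  have e2 := powerSumSeries_mul_reverse hh.ne_zero
  rw [hrev] at e1
  rw [← hr] at e2
  have hr1 : PowerSeries.constantCoeff r = 1 := by
    rw [hr, ← PowerSeries.coeff_zero_eq_constantCoeff_apply, Polynomial.coeff_coe,
      coeff_zero_reverse, hh]
  have hr0 : r * r⁻¹ = 1 := PowerSeries.mul_inv_cancel _ (by simp [hr1])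
  have hder : PowerSeries.derivative F (PowerSeries.C b * PowerSeries.X ^ D) =
      PowerSeries.C (D * b) * PowerSeries.X ^ (D - 1) := by
    ext m
    simp only [PowerSeries.coeff_derivative, PowerSeries.coeff_C_mul, PowerSeries.coeff_X_pow]
    by_cases hmD : m + 1 = D
    · have : m = D - 1 := by omega
      rw [if_pos hmD, if_pos this, ← hmD]
      push_cast; ring
    · have : m ≠ D - 1 := by omega
      rw [if_neg hmD, if_neg this]; ring
  rw [map_add, hder, mul_add, mul_add PowerSeries.X, mul_left_comm PowerSeries.X, ← pow_succ', Nat.sub_add_cancel hD] at e1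
  have hX : powerSumSeries h' = PowerSeries.X * (-(PowerSeries.derivative F (h'.reverse : PowerSeries F)) *
    (h'.reverse : PowerSeries F)⁻¹) := by rw [powerSumSeries]; ring
  obtain ⟨s, hs⟩ : ∃ s, powerSumSeries h' = PowerSeries.X * s := ⟨_, hX⟩
  have hdiff : powerSumSeries h' = powerSumSeries h - PowerSeries.X ^ D *
      (PowerSeries.C (D * b) * r⁻¹ + PowerSeries.X * (s * PowerSeries.C b * r⁻¹)) := by
    have h3 : (powerSumSeries h' - powerSumSeries h) * r = - PowerSeries.X ^ D *
      (PowerSeries.C (D * b) + PowerSeries.X * (s * PowerSeries.C b)) := by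
      linear_combination e1 - e2 - PowerSeries.C b * PowerSeries.X ^ D * hs
    linear_combination r⁻¹ * h3 - (powerSumSeries h' - powerSumSeries h) * hr0
  rw [hdiff, map_sub, PowerSeries.coeff_X_pow_mul']
  congr 1
  by_cases hkD : k = D
  · subst hkD
    simp [hr1]
  · rw [if_neg (by omega), if_neg hkD]

/-! ### The L-function of an additive character sum -/

/-- The sum `∑ g(θ)` over the roots `θ` of `h`, with multiplicity, for `g` with `g(0) = 0`. It is
expressed through the power sums of the roots, so that it is an element of the base field. -/
noncomputable def rootSum {F : Type*} [Field F] (g h : F[X]) : F :=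
  ∑ k ∈ Finset.range (g.natDegree + 1), g.coeff k * PowerSeries.coeff k (powerSumSeries h)

theorem rootSum_one {F : Type*} [Field F] (g : F[X]) : rootSum g 1 = 0 := by
  simp [rootSum, powerSumSeries_one]

theorem rootSum_mul {F : Type*} [Field F] (g : F[X]) {h₁ h₂ : F[X]} (hh₁ : h₁ ≠ 0) (hh₂ : h₂ ≠ 0) :
    rootSum g (h₁ * h₂) = rootSum g h₁ + rootSum g h₂ := by
  simp [rootSum, powerSumSeries_mul hh₁ hh₂, mul_add, Finset.sum_add_distrib]

theorem rootSum_pow {F : Type*} [Field F] (g : F[X]) {h : F[X]} (hh : h ≠ 0) (k : ℕ) :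
    rootSum g (h ^ k) = k • rootSum g h := by
  induction k with
  | zero => simp [rootSum_one]
  | succ k ih => rw [pow_succ, rootSum_mul g (pow_ne_zero _ hh) hh, ih, succ_nsmul]

/-- The effect on `rootSum g h` of changing the coefficient of `h` at distance `deg g` from the top is
a translation, which is what makes the high coefficients of the `L`-function vanish. -/
theorem rootSum_add_C_mul_X_pow {F : Type*} [Field F] {g h : F[X]} (hh : h.Monic)
    (hD : 1 ≤ g.natDegree) (hDn : g.natDegree ≤ h.natDegree) (b : F) :
    rootSum g (h + C b * X ^ (h.natDegree - g.natDegree)) =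
      rootSum g h - g.leadingCoeff * (g.natDegree * b) := by
  rw [rootSum, Finset.sum_congr rfl (g := fun k => g.coeff k * PowerSeries.coeff k (powerSumSeries h)
    - g.coeff k * if k = g.natDegree then g.natDegree * b else 0)]
  · rw [Finset.sum_sub_distrib, rootSum, leadingCoeff]
    simp
  · intro k hk
    rw [powerSumSeries_add_C_mul_X_pow hh hD hDn b (by simpa [Nat.lt_succ_iff] using hk), mul_sub]

theorem rootSum_prod_X_sub_C {K : Type*} [Field K] (g : K[X]) (hg0 : g.coeff 0 = 0) {ι : Type*}
    (s : Finset ι) (θ : ι → K) :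
    rootSum g (∏ i ∈ s, (X - C (θ i))) = ∑ i ∈ s, g.eval (θ i) := by
  classical
  induction s using Finset.induction_on with
  | empty => simp [rootSum_one]
  | insert i s hi ih =>
    rw [Finset.prod_insert hi, Finset.sum_insert hi, rootSum_mul g (X_sub_C_ne_zero _)
      (Finset.prod_ne_zero_iff.2 fun _ _ => X_sub_C_ne_zero _), ih, add_left_inj, rootSum,
      eval_eq_sum_range]
    refine Finset.sum_congr rfl fun k _ => ?_
    rcases eq_or_ne k 0 with rfl | hk
    · simp [hg0]
    · rw [coeff_powerSumSeries_X_sub_C _ hk]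

theorem rootSum_map {F K : Type*} [Field F] [Field K] (φ : F →+* K) (g : F[X]) {h : F[X]}
    (hh : h ≠ 0) : rootSum (g.map φ) (h.map φ) = φ (rootSum g h) := by
  simp [rootSum, powerSumSeries_map φ hh]

section LFunction

open Classical in
/-- The monic polynomials of degree `n` over a finite field. -/
noncomputable def monics (F : Type*) [Field F] [Fintype F] (n : ℕ) : Finset F[X] :=
  (Finset.univ : Finset (Fin n → F)).image fun c => X ^ n + ∑ i : Fin n, C (c i) * X ^ (i : ℕ)

theorem mem_monics {F : Type*} [Field F] [Fintype F] {n : ℕ} {h : F[X]} :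
    h ∈ monics F n ↔ h.Monic ∧ h.natDegree = n := by
  classical
  simp only [monics, Finset.mem_image, Finset.mem_univ, true_and]
  constructor
  · rintro ⟨c, rfl⟩
    have hlt : (∑ i : Fin n, C (c i) * X ^ (i : ℕ)).degree < (n : WithBot ℕ) := degree_sum_fin_lt c
    refine ⟨monic_X_pow_add hlt, ?_⟩
    rw [natDegree_eq_of_degree_eq (degree_add_eq_left_of_degree_lt (by simpa using hlt)),
      natDegree_X_pow]
  · rintro ⟨hm, rfl⟩
    refine ⟨fun i => h.coeff i, ?_⟩
    conv_rhs => rw [hm.as_sum]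
    rw [Fin.sum_univ_eq_sum_range (fun i => C (h.coeff i) * X ^ i)]

variable {p : ℕ} [Fact p.Prime] (ψ : AddChar (ZMod p) ℂ) (g : (ZMod p)[X])

/-- The coefficient at `t ^ n` of the `L`-function `L(t) = ∑_h ψ (rootSum g h) t ^ (deg h)`, the sum
extending over all monic polynomials `h`. -/
noncomputable def lCoeff (n : ℕ) : ℂ := ∑ h ∈ monics (ZMod p) n, ψ (rootSum g h)

theorem lCoeff_zero : lCoeff ψ g 0 = 1 := by
  have : monics (ZMod p) 0 = {1} := by
    ext h
    rw [mem_monics, Finset.mem_singleton]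
    constructor
    · rintro ⟨hm, h0⟩
      exact hm.natDegree_eq_zero.1 h0
    · rintro rfl
      simp
  simp [lCoeff, this, rootSum_one]

/-- The `L`-function is a polynomial of degree less than `deg g`: for `n ≥ deg g`, the substitution
`h ↦ h + b X ^ (n - deg g)` permutes the monic polynomials of degree `n` and, for a suitable `b`,
multiplies the sum by some `ψ c ≠ 1`. The hypothesis `deg g < p` makes `deg g` invertible. -/
theorem lCoeff_eq_zero (hψ : ψ ≠ 1) (hD1 : 1 ≤ g.natDegree) (hDp : g.natDegree < p) {n : ℕ}
    (hn : g.natDegree ≤ n) : lCoeff ψ g n = 0 := by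
  obtain ⟨c, hc⟩ := AddChar.ne_one_iff.1 hψ
  set e : ZMod p := g.leadingCoeff * g.natDegree with he
  have he0 : e ≠ 0 := by
    refine mul_ne_zero (leadingCoeff_ne_zero.2 (by rintro rfl; simp at hD1)) ?_
    rw [Ne, ZMod.natCast_eq_zero_iff]
    exact Nat.not_dvd_of_pos_of_lt hD1 hDp
  set b : ZMod p := -c / e
  have hmem : ∀ a : ZMod p, ∀ h ∈ monics (ZMod p) n,
      h + C a * X ^ (n - g.natDegree) ∈ monics (ZMod p) n := by
    intro a h hh
    obtain ⟨hm, hd⟩ := mem_monics.1 hh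
    have hlt : (C a * X ^ (n - g.natDegree)).degree < h.degree := by
      refine lt_of_le_of_lt (degree_C_mul_X_pow_le _ _) ?_
      rw [degree_eq_natDegree hm.ne_zero]
      exact_mod_cast (by omega : n - g.natDegree < h.natDegree)
    exact mem_monics.2 ⟨hm.add_of_left hlt,
      (natDegree_eq_of_degree_eq (degree_add_eq_left_of_degree_lt hlt)).trans hd⟩
  have hshift : lCoeff ψ g n = lCoeff ψ g n * ψ c := by
    conv_rhs => rw [lCoeff, Finset.sum_mul]
    rw [lCoeff]
    symm
    refine Finset.sum_bij' (fun h _ => h + C b * X ^ (n - g.natDegree))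
      (fun h _ => h + C (-b) * X ^ (n - g.natDegree)) (hmem b) (hmem (-b)) ?_ ?_ ?_
    · intro h _
      simp
    · intro h _
      simp
    · intro h hh
      obtain ⟨hm, hd⟩ := mem_monics.1 hh
      have := rootSum_add_C_mul_X_pow (g := g) hm hD1 (by omega) b
      rw [hd] at this
      rw [this, ← AddChar.map_add_eq_mul]
      congr 1
      rw [← mul_assoc, ← he]
      simp only [b]
      field_simp
      ring
  have : lCoeff ψ g n * (ψ c - 1) = 0 := by linear_combination -hshift
  exact (mul_eq_zero.1 this).resolve_right (sub_ne_zero.2 hc)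

end LFunction

/-! ### Euler product and Newton recursion -/

section Newton

open Classical in
/-- The monic irreducible polynomials of degree at most `n`. -/
noncomputable def monicPrimes (F : Type*) [Field F] [Fintype F] (n : ℕ) : Finset F[X] :=
  ((Finset.range (n + 1)).biUnion (monics F)).filter Irreducible

theorem mem_monicPrimes {F : Type*} [Field F] [Fintype F] {n : ℕ} {P : F[X]} :
    P ∈ monicPrimes F n ↔ P.Monic ∧ P.natDegree ≤ n ∧ Irreducible P := by
  simp only [monicPrimes, Finset.mem_filter, Finset.mem_biUnion, Finset.mem_range, mem_monics,
    Nat.lt_succ_iff]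
  constructor
  · rintro ⟨⟨m, hm, h1, rfl⟩, h2⟩
    exact ⟨h1, hm, h2⟩
  · rintro ⟨h1, hm, h2⟩
    exact ⟨⟨_, hm, h1, rfl⟩, h2⟩

open Classical in
/-- The analogue for polynomials of `log h = ∑_{P ^ k ∣ h} Λ(P ^ k)`. -/
theorem natDegree_eq_sum_monicPrimes {F : Type*} [Field F] [Fintype F] {h : F[X]} (hh : h.Monic) :
    h.natDegree = ∑ P ∈ monicPrimes F h.natDegree,
      ∑ k ∈ Finset.Icc 1 h.natDegree, if P ^ k ∣ h then P.natDegree else 0 := by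
  open UniqueFactorizationMonoid in
  set n := h.natDegree with hn
  have hprod : (normalizedFactors h).prod = h := by
    rw [prod_normalizedFactors_eq hh.ne_zero, hh.normalize_eq_self]
  have hmon : ∀ P ∈ normalizedFactors h, P.Monic := by
    intro P hP
    have h1 := normalize_normalized_factor P hP
    rw [← h1]
    exact monic_normalize (irreducible_of_normalized_factor P hP).ne_zero
  have hdeg : n = ((normalizedFactors h).map natDegree).sum := by
    rw [← natDegree_multiset_prod_of_monic _ hmon, hprod]
  rw [Finset.sum_multiset_map_count] at hdeg
  refine hdeg.trans ?_
  have hsub : (normalizedFactors h).toFinset ⊆ monicPrimes F n := by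
    intro P hP
    rw [Multiset.mem_toFinset] at hP
    refine mem_monicPrimes.2 ⟨hmon P hP, ?_, irreducible_of_normalized_factor P hP⟩
    exact natDegree_le_of_dvd (dvd_of_mem_normalizedFactors hP) hh.ne_zero
  rw [Finset.sum_subset hsub (fun P _ hP => by
    rw [Multiset.mem_toFinset] at hP
    rw [Multiset.count_eq_zero_of_notMem hP, zero_smul])]
  refine Finset.sum_congr rfl fun P hP => ?_
  obtain ⟨hPm, -, hPi⟩ := mem_monicPrimes.1 hP
  rw [← Finset.sum_filter, Finset.sum_const]
  congr 1
  have hiff : ∀ k, P ^ k ∣ h ↔ k ≤ (normalizedFactors h).count P := by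
    intro k
    rw [pow_dvd_iff_le_emultiplicity, emultiplicity_eq_count_normalizedFactors hPi hh.ne_zero,
      hPm.normalize_eq_self, Nat.cast_le]
  have hle : (normalizedFactors h).count P ≤ n := by
    have h1 := natDegree_le_of_dvd ((hiff _).2 le_rfl) hh.ne_zero
    rw [natDegree_pow] at h1
    exact (Nat.le_mul_of_pos_right _ hPi.natDegree_pos).trans h1
  have : (Finset.Icc 1 n).filter (fun k => P ^ k ∣ h) =
      Finset.Icc 1 ((normalizedFactors h).count P) := by
    ext k
    simp only [Finset.mem_filter, Finset.mem_Icc, hiff]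
    omega
  rw [this, Nat.card_Icc, Nat.add_sub_cancel]

variable {p : ℕ} [Fact p.Prime] (ψ : AddChar (ZMod p) ℂ) (g : (ZMod p)[X])

open Classical in
theorem sum_monics_dvd {P : (ZMod p)[X]} (hP : P.Monic) (n k : ℕ) :
    (∑ h ∈ monics (ZMod p) n, if P ^ k ∣ h then ψ (rootSum g h) else 0) =
      if k * P.natDegree ≤ n then ψ (rootSum g P) ^ k * lCoeff ψ g (n - k * P.natDegree) else 0 := by
  rw [← Finset.sum_filter]
  have hPk : (P ^ k).Monic := hP.pow k
  have hdPk : (P ^ k).natDegree = k * P.natDegree := natDegree_pow _ _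
  split_ifs with hk
  · rw [lCoeff, Finset.mul_sum]
    symm
    refine Finset.sum_bij (fun h _ => P ^ k * h) ?_ ?_ ?_ ?_
    · intro h hh
      obtain ⟨hm, hd⟩ := mem_monics.1 hh
      refine Finset.mem_filter.2 ⟨mem_monics.2 ⟨hPk.mul hm, ?_⟩, dvd_mul_right _ _⟩
      rw [hPk.natDegree_mul hm, hdPk, hd]
      omega
    · intro h₁ _ h₂ _ h12
      exact mul_left_cancel₀ hPk.ne_zero h12
    · intro h hh
      obtain ⟨hh, q, rfl⟩ := Finset.mem_filter.1 hh
      obtain ⟨hm, hd⟩ := mem_monics.1 hh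
      have hqm : q.Monic := hPk.of_mul_monic_left hm
      refine ⟨q, mem_monics.2 ⟨hqm, ?_⟩, rfl⟩
      rw [hPk.natDegree_mul hqm, hdPk] at hd
      omega
    · intro h hh
      obtain ⟨hm, hd⟩ := mem_monics.1 hh
      rw [rootSum_mul g hPk.ne_zero hm.ne_zero, rootSum_pow g hP.ne_zero, AddChar.map_add_eq_mul,
        AddChar.map_nsmul_eq_pow]
  · refine Finset.sum_eq_zero fun h hh => ?_
    exfalso
    obtain ⟨hh, hd⟩ := Finset.mem_filter.1 hh
    obtain ⟨hm, hd'⟩ := mem_monics.1 hh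
    have := natDegree_le_of_dvd hd hm.ne_zero
    omega

open Classical in
/-- The coefficient at `t ^ m` of `t L'(t) / L(t)`, read off from the Euler product: the sum of
`deg P * ψ (rootSum g P) ^ (m / deg P)` over the monic irreducible `P` with `deg P ∣ m`. -/
noncomputable def primePowerSum (m : ℕ) : ℂ :=
  ∑ P ∈ (monicPrimes (ZMod p) m).filter (fun P => P.natDegree ∣ m),
    (P.natDegree : ℂ) * ψ (rootSum g P) ^ (m / P.natDegree)

/-- The identity `t L' = (t L' / L) L`, coefficient by coefficient. -/
theorem lCoeff_newton (n : ℕ) :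
    (n : ℂ) * lCoeff ψ g n = ∑ m ∈ Finset.Icc 1 n, primePowerSum ψ g m * lCoeff ψ g (n - m) := by
  classical
  have h1 : (n : ℂ) * lCoeff ψ g n = ∑ P ∈ monicPrimes (ZMod p) n, ∑ k ∈ Finset.Icc 1 n,
      (P.natDegree : ℂ) * ∑ h ∈ monics (ZMod p) n, if P ^ k ∣ h then ψ (rootSum g h) else 0 := by
    rw [lCoeff, Finset.mul_sum]
    simp_rw [Finset.mul_sum]
    rw [Finset.sum_congr rfl fun P _ => Finset.sum_comm, Finset.sum_comm]
    refine Finset.sum_congr rfl fun h hh => ?_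
    obtain ⟨hm, hd⟩ := mem_monics.1 hh
    have h2 := natDegree_eq_sum_monicPrimes hm
    rw [hd] at h2
    conv_lhs => rw [h2]
    push_cast
    simp_rw [Finset.sum_mul]
    refine Finset.sum_congr rfl fun P _ => Finset.sum_congr rfl fun k _ => ?_
    split_ifs <;> simp
  have h2 : ∀ P ∈ monicPrimes (ZMod p) n, (∑ k ∈ Finset.Icc 1 n,
      (P.natDegree : ℂ) * ∑ h ∈ monics (ZMod p) n, if P ^ k ∣ h then ψ (rootSum g h) else 0) =
      ∑ m ∈ Finset.Icc 1 n, if P.natDegree ∣ m then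
        (P.natDegree : ℂ) * ψ (rootSum g P) ^ (m / P.natDegree) * lCoeff ψ g (n - m) else 0 := by
    intro P hP
    obtain ⟨hPm, -, hPi⟩ := mem_monicPrimes.1 hP
    have hpos := hPi.natDegree_pos
    simp_rw [sum_monics_dvd ψ g hPm, mul_ite, mul_zero]
    rw [← Finset.sum_filter, ← Finset.sum_filter]
    refine Finset.sum_bij (fun k _ => k * P.natDegree) ?_ ?_ ?_ ?_
    · intro k hk
      simp only [Finset.mem_filter, Finset.mem_Icc] at hk ⊢
      exact ⟨⟨Nat.mul_pos hk.1.1 hpos, hk.2⟩, dvd_mul_left _ _⟩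
    · intro k _ k' _ hkk
      exact Nat.eq_of_mul_eq_mul_right hpos hkk
    · intro m hm
      simp only [Finset.mem_filter, Finset.mem_Icc] at hm
      obtain ⟨⟨hm1, hmn⟩, k, rfl⟩ := hm
      refine ⟨k, ?_, mul_comm _ _⟩
      simp only [Finset.mem_filter, Finset.mem_Icc]
      refine ⟨⟨Nat.pos_of_mul_pos_left hm1, ?_⟩, by rwa [mul_comm]⟩
      exact (Nat.le_mul_of_pos_left _ hpos).trans hmn
    · intro k _
      rw [Nat.mul_div_cancel _ hpos, mul_assoc]
  rw [h1, Finset.sum_congr rfl h2, Finset.sum_comm]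
  refine Finset.sum_congr rfl fun m hm => ?_
  rw [← Finset.sum_filter, primePowerSum, Finset.sum_mul]
  refine Finset.sum_congr ?_ fun _ _ => rfl
  ext P
  simp only [Finset.mem_filter, mem_monicPrimes, Finset.mem_Icc] at hm ⊢
  constructor
  · rintro ⟨⟨a, b, c⟩, d⟩
    exact ⟨⟨a, Nat.le_of_dvd hm.1 d, c⟩, d⟩
  · rintro ⟨⟨a, b, c⟩, d⟩
    exact ⟨⟨a, b.trans hm.2, c⟩, d⟩

end Newton

/-! ### Exponential sums over extension fields -/

section Extension

variable {p : ℕ} [Fact p.Prime]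

/-- The conjugates of `x` are its first `deg (minpoly x)` Frobenius images. -/
theorem map_minpoly_eq_prod {K : Type*} [Field K] [Finite K] [Algebra (ZMod p) K] (x : K) :
    (minpoly (ZMod p) x).map (algebraMap (ZMod p) K) =
      ∏ i ∈ Finset.range (minpoly (ZMod p) x).natDegree, (X - C (x ^ p ^ i)) := by
  classical
  have : CharP K p := charP_of_injective_algebraMap (algebraMap (ZMod p) K).injective p
  have hxint : IsIntegral (ZMod p) x := Algebra.IsIntegral.isIntegral x
  set P := minpoly (ZMod p) x with hP
  have hPi : Irreducible P := minpoly.irreducible hxint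
  have hPm : P.Monic := minpoly.monic hxint
  have hinj : ∀ i j, i < j → j < P.natDegree → x ^ p ^ i ≠ x ^ p ^ j := by
    intro i j hij hj h
    have h1 : x ^ p ^ (j - i) = x := by
      apply iterateFrobenius_inj K p i
      rw [iterateFrobenius_def, iterateFrobenius_def, ← pow_mul, ← pow_add, Nat.sub_add_cancel hij.le,
        h]
    have h2 : P ∣ X ^ (Nat.card (ZMod p)) ^ (j - i) - X := by
      apply minpoly.dvd
      simp [h1]
    have h3 := Nat.le_of_dvd (by omega) (hPi.natDegree_dvd_of_dvd_X_pow_card_pow_sub_X h2)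
    omega
  have hdvd : ∏ i ∈ Finset.range P.natDegree, (X - C (x ^ p ^ i)) ∣ P.map (algebraMap (ZMod p) K) := by
    have h0 : P.map (algebraMap (ZMod p) K) ≠ 0 := (hPm.map _).ne_zero
    have h1 : ((Finset.range P.natDegree).val.map fun i => x ^ p ^ i) ≤
        (P.map (algebraMap (ZMod p) K)).roots := by
      rw [Multiset.le_iff_subset]
      · intro y hy
        obtain ⟨i, -, rfl⟩ := Multiset.mem_map.1 hy
        rw [mem_roots h0, IsRoot, eval_map_algebraMap]
        have h2 : aeval (iterateFrobenius K p i x) P = 0 := by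
          have h3 : aeval x P = 0 := minpoly.aeval _ _
          have h4 := congrArg (iterateFrobenius K p i) h3
          rw [map_zero, aeval_def, hom_eval₂] at h4
          rw [aeval_def, ← h4]
          congr 1
          exact Subsingleton.elim _ _
        rwa [iterateFrobenius_def] at h2
      · refine (Finset.range P.natDegree).nodup.map_on ?_
        intro i hi j hj h
        simp only [Finset.range_val, Multiset.mem_range] at hi hj
        rcases lt_trichotomy i j with hij | hij | hij
        · exact absurd h (hinj i j hij hj)
        · exact hij
        · exact absurd h.symm (hinj j i hij hi)
    have h2 := (Multiset.prod_X_sub_C_dvd_iff_le_roots h0 _).2 h1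
    rwa [Multiset.map_map] at h2
  refine eq_of_monic_of_dvd_of_natDegree_le
    (monic_prod_of_monic _ (fun i => X - C (x ^ p ^ i)) fun _ _ => monic_X_sub_C _)
    (hPm.map _) hdvd ?_
  rw [natDegree_prod_of_monic _ _ fun _ _ => monic_X_sub_C _]
  simp only [natDegree_X_sub_C]
  simp

/-- The Frobenius orbit of `x`, run through over the whole degree of `K`, covers the roots of its
minimal polynomial `[K : 𝔽_p(x)]` times. -/
theorem trace_aeval_eq_rootSum {K : Type*} [Field K] [Finite K] [Algebra (ZMod p) K]
    (g : (ZMod p)[X]) (hg0 : g.coeff 0 = 0) (x : K) :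
    Algebra.trace (ZMod p) K (aeval x g) =
      (Module.finrank (ZMod p) K / (minpoly (ZMod p) x).natDegree) •
        rootSum g (minpoly (ZMod p) x) := by
  have : CharP K p := charP_of_injective_algebraMap (algebraMap (ZMod p) K).injective p
  have hxint : IsIntegral (ZMod p) x := Algebra.IsIntegral.isIntegral x
  have hP := map_minpoly_eq_prod (p := p) x
  have hdvd : (minpoly (ZMod p) x).natDegree ∣ Module.finrank (ZMod p) K := minpoly.degree_dvd hxint
  have hPi : Irreducible (minpoly (ZMod p) x) := minpoly.irreducible hxint
  have hpos := hPi.natDegree_pos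
  set P := minpoly (ZMod p) x with hPdef
  obtain ⟨t, ht⟩ := hdvd
  rw [ht, Nat.mul_div_cancel_left _ hpos]
  apply (algebraMap (ZMod p) K).injective
  rw [FiniteField.algebraMap_trace_eq_sum_pow, ht, map_nsmul, ← rootSum_map _ _ hPi.ne_zero, hP,
    rootSum_prod_X_sub_C _ (by simp [hg0])]
  have hterm : ∀ i, aeval x g ^ Nat.card (ZMod p) ^ i =
      (g.map (algebraMap (ZMod p) K)).eval (x ^ p ^ i) := by
    intro i
    rw [Nat.card_zmod, ← iterateFrobenius_def, ← iterateFrobenius_def, aeval_def, hom_eval₂, eval_map]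
    congr 1
    exact Subsingleton.elim _ _
  simp_rw [hterm]
  have hxe : x ^ p ^ P.natDegree = x := by
    have h1 : P ∣ X ^ (Nat.card (ZMod p)) ^ P.natDegree - X :=
      hPi.natDegree_dvd_iff_dvd_X_pow_card_pow_sub_X.1 dvd_rfl
    have h2 : aeval x (X ^ (Nat.card (ZMod p)) ^ P.natDegree - X : (ZMod p)[X]) = 0 :=
      (minpoly.dvd_iff).1 h1
    simpa [sub_eq_zero, Nat.card_zmod] using h2
  clear ht
  induction t with
  | zero => simp
  | succ t ih =>
    rw [mul_add_one, add_comm, Finset.sum_range_add, succ_nsmul', ← ih]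
    congr 1
    refine Finset.sum_congr rfl fun i _ => ?_
    rw [pow_add, pow_mul, hxe]

/-- Grouping the elements of `K` by their minimal polynomials turns the exponential sum over `K` into
a coefficient of `t L' / L`. -/
theorem expSum_eq_primePowerSum (ψ : AddChar (ZMod p) ℂ) (g : (ZMod p)[X]) (hg0 : g.coeff 0 = 0)
    (K : Type*) [Field K] [Fintype K] [Algebra (ZMod p) K] :
    expSum ψ g K = primePowerSum ψ g (Module.finrank (ZMod p) K) := by
  classical
  set m := Module.finrank (ZMod p) K with hm
  have hxint : ∀ x : K, IsIntegral (ZMod p) x := fun x => Algebra.IsIntegral.isIntegral x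
  rw [expSum, primePowerSum]
  rw [← Finset.sum_fiberwise_of_maps_to (s := (Finset.univ : Finset K))
    (t := (monicPrimes (ZMod p) m).filter (fun P => P.natDegree ∣ m)) (g := minpoly (ZMod p))]
  · refine Finset.sum_congr rfl fun P hP => ?_
    rw [Finset.mem_filter, mem_monicPrimes] at hP
    obtain ⟨⟨hPm, -, hPi⟩, hPd⟩ := hP
    rw [Finset.sum_congr rfl (g := fun _ => ψ (rootSum g P) ^ (m / P.natDegree))]
    · rw [Finset.sum_const, nsmul_eq_mul]
      congr 2
      have hcard : Fintype.card (P.rootSet K) = P.natDegree := by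
        apply card_rootSet_eq_natDegree (PerfectField.separable_of_irreducible hPi)
        have h1 : P ∣ X ^ (Nat.card (ZMod p)) ^ m - X :=
          hPi.natDegree_dvd_iff_dvd_X_pow_card_pow_sub_X.1 hPd
        have h2 := Polynomial.map_dvd (algebraMap (ZMod p) K) h1
        have h3 : (Nat.card (ZMod p)) ^ m = Fintype.card K := by
          rw [Nat.card_zmod, Module.card_eq_pow_finrank (K := ZMod p), ZMod.card]
        rw [h3] at h2
        refine Splits.of_dvd ?_ ?_ h2
        · exact FiniteField.splits_X_pow_card_sub_X p
        · simp only [Polynomial.map_sub, Polynomial.map_pow, map_X]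
          exact FiniteField.X_pow_card_sub_X_ne_zero K Fintype.one_lt_card
      rw [← hcard, ← Set.toFinset_card]
      congr 1
      ext x
      simp only [Finset.mem_filter, Finset.mem_univ, true_and, Set.mem_toFinset]
      rw [mem_rootSet_of_ne hPm.ne_zero]
      constructor
      · rintro rfl
        exact minpoly.aeval _ _
      · intro h
        exact (minpoly.eq_of_irreducible_of_monic hPi h hPm).symm
    · intro x hx
      have hx' : minpoly (ZMod p) x = P := (Finset.mem_filter.1 hx).2
      rw [trace_aeval_eq_rootSum g hg0, hx', AddChar.map_nsmul_eq_pow]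
  · intro x _
    rw [Finset.mem_filter, mem_monicPrimes]
    have hdvd : (minpoly (ZMod p) x).natDegree ∣ m := minpoly.degree_dvd (hxint x)
    exact ⟨⟨minpoly.monic (hxint x), Nat.le_of_dvd Module.finrank_pos hdvd,
      minpoly.irreducible (hxint x)⟩, hdvd⟩

end Extension

/-! ### Reciprocal roots and the Weil bound -/

section RiemannHypothesis

/-- If the power sums of finitely many complex numbers are `O(R ^ a)`, each of the numbers has modulus
at most `R`. The combination of consecutive power sums with the coefficients of a polynomial
vanishing at all the other numbers isolates `β ^ a`. -/
theorem norm_le_of_norm_powerSum_le (s : Multiset ℂ) {B R : ℝ} (hR : 0 < R)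
    (hs : ∀ a : ℕ, 1 ≤ a → ‖(s.map (· ^ a)).sum‖ ≤ B * R ^ a) {β : ℂ} (hβ : β ∈ s) :
    ‖β‖ ≤ R := by
  classical
  set Q : ℂ[X] := ∏ γ ∈ s.toFinset.erase β, (X - C γ) with hQ
  have hQβ : Q.eval β ≠ 0 := by
    rw [hQ, eval_prod, Finset.prod_ne_zero_iff]
    intro γ hγ
    simpa [sub_eq_zero] using (Finset.ne_of_mem_erase hγ).symm
  have hQγ : ∀ γ ∈ s, γ ≠ β → Q.eval γ = 0 := by
    intro γ hγ hne
    rw [hQ, eval_prod]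
    exact Finset.prod_eq_zero (Finset.mem_erase.2 ⟨hne, Multiset.mem_toFinset.2 hγ⟩) (by simp)
  have key : ∀ a : ℕ, ∑ r ∈ Finset.range (Q.natDegree + 1), Q.coeff r * (s.map (· ^ (a + r))).sum =
      s.count β * (β ^ a * Q.eval β) := by
    intro a
    have h1 : ∀ r ∈ Finset.range (Q.natDegree + 1), Q.coeff r * (s.map (· ^ (a + r))).sum =
        ∑ γ ∈ s.toFinset, s.count γ * (γ ^ a * (Q.coeff r * γ ^ r)) := by
      intro r _
      rw [Finset.sum_multiset_map_count, Finset.mul_sum]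
      refine Finset.sum_congr rfl fun γ _ => ?_
      rw [nsmul_eq_mul, pow_add]
      ring
    rw [Finset.sum_congr rfl h1, Finset.sum_comm, Finset.sum_eq_single β]
    · rw [← Finset.mul_sum, ← Finset.mul_sum, ← eval_eq_sum_range]
    · intro γ hγ hne
      rw [← Finset.mul_sum, ← Finset.mul_sum, ← eval_eq_sum_range,
        hQγ γ (Multiset.mem_toFinset.1 hγ) hne]
      simp
    · intro h
      exact absurd (Multiset.mem_toFinset.2 hβ) h
  set B' : ℝ := ∑ r ∈ Finset.range (Q.natDegree + 1), ‖Q.coeff r‖ * (B * R ^ r) with hB'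
  have hbound : ∀ a : ℕ, 1 ≤ a → ‖Q.eval β‖ * ‖β‖ ^ a ≤ B' * R ^ a := by
    intro a ha
    have hcount : (1 : ℝ) ≤ s.count β := by
      exact_mod_cast Multiset.one_le_count_iff_mem.2 hβ
    calc ‖Q.eval β‖ * ‖β‖ ^ a ≤ s.count β * (‖β‖ ^ a * ‖Q.eval β‖) := by
          rw [mul_comm]
          exact le_mul_of_one_le_left (by positivity) hcount
      _ = ‖∑ r ∈ Finset.range (Q.natDegree + 1), Q.coeff r * (s.map (· ^ (a + r))).sum‖ := by
          rw [key]
          simp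
      _ ≤ ∑ r ∈ Finset.range (Q.natDegree + 1), ‖Q.coeff r‖ * (B * R ^ (a + r)) := by
          refine norm_sum_le_of_le _ fun r _ => ?_
          rw [norm_mul]
          exact mul_le_mul_of_nonneg_left (hs _ (by omega)) (norm_nonneg _)
      _ = B' * R ^ a := by
          rw [hB', Finset.sum_mul]
          refine Finset.sum_congr rfl fun r _ => ?_
          rw [pow_add]
          ring
  by_contra! hlt
  have hratio : 1 < ‖β‖ / R := (one_lt_div hR).2 hlt
  obtain ⟨a, ha⟩ := ((tendsto_pow_atTop_atTop_of_one_lt hratio).eventually_gt_atTop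
    (B' / ‖Q.eval β‖)).and (Filter.eventually_ge_atTop 1) |>.exists
  have hQpos : 0 < ‖Q.eval β‖ := norm_pos_iff.2 hQβ
  have h1 := hbound a ha.2
  have h2 := ha.1
  rw [div_lt_iff₀ hQpos, div_pow, div_mul_eq_mul_div, lt_div_iff₀ (by positivity)] at h2
  linarith

theorem coeff_powerSumSeries_prod {K : Type*} [Field K] (s : Multiset K) {k : ℕ} (hk : k ≠ 0) :
    PowerSeries.coeff k (powerSumSeries (s.map fun θ => X - C θ).prod) = (s.map (· ^ k)).sum := by
  induction s using Multiset.induction_on with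
  | empty => simp [powerSumSeries_one]
  | cons θ s ih =>
    rw [Multiset.map_cons, Multiset.prod_cons, powerSumSeries_mul (X_sub_C_ne_zero θ)
      (Multiset.prod_ne_zero (by simp [X_sub_C_ne_zero])), map_add, ih,
      coeff_powerSumSeries_X_sub_C θ hk, Multiset.map_cons, Multiset.sum_cons]

variable {p : ℕ} [Fact p.Prime]

/-- The numbers in `s` are the reciprocal roots of the `L`-function, padded with zeros to exactly
`deg g - 1` of them. -/
theorem exists_primePowerSum_eq (ψ : AddChar (ZMod p) ℂ) (hψ : ψ ≠ 1) (g : (ZMod p)[X])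
    (hg1 : 1 ≤ g.natDegree) (hgp : g.natDegree < p) :
    ∃ s : Multiset ℂ, s.card = g.natDegree - 1 ∧
      ∀ m : ℕ, 1 ≤ m → primePowerSum ψ g m = -(s.map (· ^ m)).sum := by
  set D := g.natDegree with hD
  set L : ℂ[X] := ∑ n ∈ Finset.range D, C (lCoeff ψ g n) * X ^ n with hL
  have hLc : ∀ n, L.coeff n = lCoeff ψ g n := by
    intro n
    rw [hL, finsetSum_coeff]
    simp only [coeff_C_mul_X_pow]
    simp only [Finset.sum_ite_eq, Finset.mem_range]
    split_ifs with h
    · rfl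
    · exact (lCoeff_eq_zero ψ g hψ hg1 hgp (by omega)).symm
  have hLd : L.natDegree ≤ D - 1 := by
    rw [natDegree_le_iff_coeff_eq_zero]
    intro n hn
    rw [hLc]
    exact lCoeff_eq_zero ψ g hψ hg1 hgp (by omega)
  -- `h` has leading coefficient `L(0) = 1`, and its roots are the reciprocal roots of `L`
  set h : ℂ[X] := L.reflect (D - 1) with hh
  have hhd : h.natDegree ≤ D - 1 := by
    rw [natDegree_le_iff_coeff_eq_zero]
    intro n hn
    rw [hh, coeff_reflect, revAt_eq_self_of_lt hn]
    exact coeff_eq_zero_of_natDegree_lt (by omega)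
  have hlead : h.coeff (D - 1) = 1 := by
    rw [hh, coeff_reflect, revAt_le le_rfl, Nat.sub_self, hLc, lCoeff_zero]
  have hhm : h.Monic := monic_of_natDegree_le_of_coeff_eq_one _ hhd hlead
  have hhd' : h.natDegree = D - 1 :=
    natDegree_eq_of_le_of_coeff_ne_zero hhd (by rw [hlead]; exact one_ne_zero)
  have hrev : h.reverse = L := by
    rw [reverse, hhd', hh]
    ext n
    simp
  have hsplit : (h.roots.map fun θ => X - C θ).prod = h :=
    ((IsAlgClosed.splits h).eq_prod_roots_of_monic hhm).symm
  refine ⟨h.roots, by rw [← hhd', (IsAlgClosed.splits h).natDegree_eq_card_roots], ?_⟩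
  have hser : PowerSeries.mk (fun m => if m = 0 then 0 else -primePowerSum ψ g m) =
      powerSumSeries h := by
    rw [eq_powerSumSeries_iff hhm.ne_zero, hrev]
    ext n
    rw [map_neg, PowerSeries.coeff_mul, Finset.Nat.sum_antidiagonal_eq_sum_range_succ_mk]
    have hR : PowerSeries.coeff n (PowerSeries.X * PowerSeries.derivative ℂ (L : PowerSeries ℂ)) =
        n * lCoeff ψ g n := by
      cases n with
      | zero => simp
      | succ n =>
        rw [PowerSeries.coeff_succ_X_mul, PowerSeries.coeff_derivative]
        simp [hLc, mul_comm]
    rw [hR, lCoeff_newton, ← Finset.sum_neg_distrib, Finset.sum_range_succ']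
    simp only [PowerSeries.coeff_mk, if_true, zero_mul, add_zero, Nat.succ_ne_zero, if_false,
      Polynomial.coeff_coe, hLc]
    rw [Finset.range_eq_Ico, Finset.sum_Ico_add' (fun m => -primePowerSum ψ g m * lCoeff ψ g (n - m))]
    refine Finset.sum_congr ?_ fun _ _ => by ring
    ext m
    simp
  intro m hm
  have h1 := congrArg (PowerSeries.coeff m) hser
  rw [← hsplit, coeff_powerSumSeries_prod _ (by omega), PowerSeries.coeff_mk, if_neg (by omega)] at h1
  rw [← h1, neg_neg]

/-- Weil's bound for additive character sums. By `norm_expSum_le` the even power sums of the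
reciprocal roots `ω` of the `L`-function are `O(p ^ a)`, whence `|ω| ≤ √p`; the sum over the prime
field is minus the sum of the `deg g - 1` numbers `ω`. -/
theorem norm_sum_addChar_eval_le (hp : 3 ≤ p) (ψ : AddChar (ZMod p) ℂ) (hψ : ψ ≠ 1)
    (g : (ZMod p)[X]) (hg0 : g.coeff 0 = 0) (hg1 : 1 ≤ g.natDegree) (hgp : g.natDegree < p) :
    ‖∑ x : ZMod p, ψ (g.eval x)‖ ≤ (g.natDegree - 1 : ℝ) * Real.sqrt p := by
  obtain ⟨s, hcard, hs⟩ := exists_primePowerSum_eq ψ hψ g hg1 hgp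
  have hp0 : (0 : ℝ) < p := by exact_mod_cast (by omega : 0 < p)
  have hω : ∀ ω ∈ s, ‖ω‖ ≤ Real.sqrt p := by
    intro ω hω
    apply Real.le_sqrt_of_sq_le
    rw [← norm_pow]
    refine norm_le_of_norm_powerSum_le (s.map (· ^ 2)) (B := p * (2 * g.natDegree + 2)) hp0 ?_
      (Multiset.mem_map_of_mem _ hω)
    intro a ha
    obtain ⟨b, rfl⟩ : ∃ b, a = b + 1 := ⟨a - 1, by omega⟩
    let K := GaloisField p (2 * (b + 1))
    let _ : Fintype K := Fintype.ofFinite K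
    have hfin : Module.finrank (ZMod p) K = 2 * (b + 1) := GaloisField.finrank p (by omega)
    have h1 := norm_expSum_le hp ψ hψ g hg1 hgp K b hfin
    rw [expSum_eq_primePowerSum ψ g hg0, hfin, hs _ (by omega), norm_neg] at h1
    rw [Multiset.map_map]
    simp only [Function.comp_def, ← pow_mul]
    exact h1
  have hT : ∑ x : ZMod p, ψ (g.eval x) = -s.sum := by
    have h1 := expSum_eq_primePowerSum ψ g hg0 (ZMod p)
    rw [Module.finrank_self, hs 1 le_rfl] at h1
    simpa [expSum] using h1
  rw [hT, norm_neg]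
  calc ‖s.sum‖ ≤ (s.map fun ω => ‖ω‖).sum := norm_multiset_sum_le s
    _ ≤ (s.map fun ω => ‖ω‖).card • Real.sqrt p := by
        refine Multiset.sum_le_card_nsmul _ _ ?_
        simpa using hω
    _ = _ := by
        rw [Multiset.card_map, hcard, nsmul_eq_mul, Nat.cast_sub hg1, Nat.cast_one]

end RiemannHypothesis

end Weil

/-! ### Periodic functions and Fourier series -/

section Periodic

variable {d : ℕ} {f : (Fin d → ℝ) → ℝ}

theorem periodic_int (hper : ∀ (x : Fin d → ℝ) (i : Fin d), f (x + Pi.single i 1) = f x)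
    (x : Fin d → ℝ) (z : Fin d → ℤ) : f (x + fun i => (z i : ℝ)) = f x := by
  let H : AddSubgroup (Fin d → ℝ) :=
    { carrier := {v | ∀ x, f (x + v) = f x}
      zero_mem' := fun x => by rw [add_zero]
      add_mem' := fun {a b} ha hb x => by rw [← add_assoc, hb, ha]
      neg_mem' := fun {a} ha x => by rw [← ha (x + -a), neg_add_cancel_right] }
  have hz : (fun i => (z i : ℝ)) = ∑ i, z i • (Pi.single i (1 : ℝ) : Fin d → ℝ) := by
    ext j
    simp [Finset.sum_apply, Pi.single_apply]
  have hmem : (fun i => (z i : ℝ)) ∈ H := by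
    rw [hz]
    exact H.sum_mem fun i _ => H.zsmul_mem (show Pi.single i 1 ∈ H from fun x => hper x i) _
  exact hmem x

theorem exists_torus_lift (hf : Continuous f)
    (hper : ∀ (x : Fin d → ℝ) (i : Fin d), f (x + Pi.single i 1) = f x) :
    ∃ F : C(UnitAddTorus (Fin d), ℝ), ∀ x : Fin d → ℝ, F (fun i => (x i : UnitAddCircle)) = f x := by
  have hq : IsOpenQuotientMap
      (Pi.map fun _ : Fin d => ((↑) : ℝ → UnitAddCircle)) :=
    IsOpenQuotientMap.piMap fun _ => QuotientAddGroup.isOpenQuotientMap_mk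
  let F : UnitAddTorus (Fin d) → ℝ := fun y => f fun i => (y i).out
  have hF : ∀ x : Fin d → ℝ, F (fun i => (x i : UnitAddCircle)) = f x := by
    intro x
    have h1 : ∀ i, ∃ z : ℤ, ((x i : UnitAddCircle).out : ℝ) = x i + z := by
      intro i
      have h2 : (((x i : UnitAddCircle).out : ℝ) : UnitAddCircle) = (x i : UnitAddCircle) :=
        QuotientAddGroup.out_eq' _
      rw [QuotientAddGroup.eq_iff_sub_mem, AddSubgroup.mem_zmultiples_iff] at h2
      obtain ⟨z, hz⟩ := h2
      refine ⟨z, ?_⟩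
      rw [zsmul_one] at hz
      linarith
    choose z hz using h1
    change f (fun i => ((x i : UnitAddCircle).out : ℝ)) = f x
    rw [← periodic_int hper x z]
    congr 1
    ext i
    exact hz i
  refine ⟨⟨F, hq.isQuotientMap.continuous_iff.2 ?_⟩, hF⟩
  convert hf using 1
  ext x
  exact hF x

theorem ioc_ae_eq_icc :
    ({x : Fin d → ℝ | ∀ i, x i ∈ Set.Ioc ((0 : Fin d → ℝ) i) ((0 : Fin d → ℝ) i + 1)} :
      Set (Fin d → ℝ)) =ᵐ[volume] Set.Icc (0 : Fin d → ℝ) 1 := by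
  have h := Measure.univ_pi_Ioc_ae_eq_Icc (μ := fun _ : Fin d => (volume : Measure ℝ))
    (f := fun _ => 0) (g := fun _ => 1)
  have hset : {x : Fin d → ℝ | ∀ i, x i ∈ Set.Ioc ((0 : Fin d → ℝ) i) ((0 : Fin d → ℝ) i + 1)} =
      Set.univ.pi fun _ : Fin d => Set.Ioc (0 : ℝ) 1 := by
    ext x
    simp
  rw [hset]
  exact h

/-- Translation invariance of the integral of a periodic function over a period cube. -/
theorem setIntegral_translate (hf : Continuous f)
    (hper : ∀ (x : Fin d → ℝ) (i : Fin d), f (x + Pi.single i 1) = f x) (v : Fin d → ℝ) :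
    ∫ x in Set.Icc (0 : Fin d → ℝ) 1, f (x + v) = ∫ x in Set.Icc (0 : Fin d → ℝ) 1, f x := by
  obtain ⟨F, hF⟩ := exists_torus_lift hf hper
  have h := (UnitAddTorus.integral_preimage F v).symm.trans (UnitAddTorus.integral_preimage F 0)
  simp only [hF] at h
  rw [setIntegral_congr_set ioc_ae_eq_icc] at h
  have h2 := (measurePreserving_add_right volume v).setIntegral_preimage_emb
    (measurableEmbedding_addRight v) f
    {x : Fin d → ℝ | ∀ i, x i ∈ Set.Ioc (v i) (v i + 1)}
  rw [← h, ← h2, ← setIntegral_congr_set ioc_ae_eq_icc]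
  congr 2
  ext x
  simp only [Set.mem_ofPred_eq, Set.mem_preimage, Set.mem_Ioc, Pi.zero_apply, Pi.add_apply]
  refine forall_congr' fun i => ?_
  constructor <;> rintro ⟨h1, h2⟩ <;> constructor <;> linarith

/-- A continuous periodic function with summable Fourier coefficients is the sum of its Fourier
series at every point. -/
theorem hasSum_fourierCoeffCube (hf : Continuous f)
    (hper : ∀ (x : Fin d → ℝ) (i : Fin d), f (x + Pi.single i 1) = f x)
    (hsum : Summable fun k : Fin d → ℤ => ‖fourierCoeffCube f k‖) (x : Fin d → ℝ) :
    HasSum (fun k : Fin d → ℤ => fourierCoeffCube f k *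
      Complex.exp (2 * Real.pi * Complex.I * ∑ j, (k j : ℂ) * (x j : ℂ))) (f x : ℂ) := by
  obtain ⟨F, hF⟩ := exists_torus_lift hf hper
  let G : C(UnitAddTorus (Fin d), ℂ) := ⟨fun y => (F y : ℂ), by fun_prop⟩
  have hmF : ∀ (k : Fin d → ℤ) (x : Fin d → ℝ),
      UnitAddTorus.mFourier k (fun i => (x i : UnitAddCircle)) =
        Complex.exp (2 * Real.pi * Complex.I * ∑ j, (k j : ℂ) * (x j : ℂ)) := by
    intro k x
    simp only [UnitAddTorus.mFourier, ContinuousMap.coe_mk, fourier_coe_apply]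
    rw [← Complex.exp_sum, Finset.mul_sum]
    congr 1
    refine Finset.sum_congr rfl fun i _ => ?_
    simp
    ring
  have hc : ∀ k, UnitAddTorus.mFourierCoeff G k = fourierCoeffCube f k := by
    intro k
    rw [UnitAddTorus.mFourierCoeff_eq_integral G k 0, fourierCoeffCube,
      setIntegral_congr_set ioc_ae_eq_icc]
    congr 1
    ext x
    rw [hmF, smul_eq_mul, mul_comm]
    congr 1
    · simp [G, hF]
    · congr 1
      simp [Finset.sum_neg_distrib]
  have hs : Summable (UnitAddTorus.mFourierCoeff G) := by
    rw [funext hc]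
    exact hsum.of_norm
  have h := UnitAddTorus.hasSum_mFourier_series_apply_of_summable hs
    (fun i => (x i : UnitAddCircle))
  simp only [hc, hmF, smul_eq_mul] at h
  simpa [G, hF] using h

end Periodic

/-! ### Character sums along the curve and over the grid -/

section CharacterSums

open Polynomial

variable {d n : ℕ} [Fact n.Prime]

/-- At points with coordinates in `(1/n)ℤ` the exponentials are additive characters of `ℤ/n`. -/
theorem exp_eq_stdAddChar (k a : Fin d → ℤ) :
    Complex.exp (2 * Real.pi * Complex.I * ∑ j, (k j : ℂ) * (((a j : ℝ) / n : ℝ) : ℂ)) =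
      ZMod.stdAddChar (∑ j, (k j : ZMod n) * (a j : ZMod n)) := by
  have h1 : ∑ j, (k j : ZMod n) * (a j : ZMod n) = ((∑ j, k j * a j : ℤ) : ZMod n) := by
    push_cast
    rfl
  rw [h1, ZMod.stdAddChar_coe, mul_div_assoc]
  congr 2
  push_cast
  rw [Finset.sum_div]
  exact Finset.sum_congr rfl fun j _ => by ring

/-- Weil's bound along the curve `x ↦ (x, x², …, x^d)`. For `d ≥ n` its hypothesis on the degree may
fail, but then the trivial bound `n` is already below `(d - 1) √n`. -/
theorem norm_sum_stdAddChar_le (hn : 3 ≤ n) (k : Fin d → ZMod n) (hk : k ≠ 0) :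
    ‖∑ x : ZMod n, ZMod.stdAddChar (∑ j, k j * x ^ ((j : ℕ) + 1))‖ ≤
      ((d : ℝ) - 1) * Real.sqrt n := by
  have hn3 : (3 : ℝ) ≤ n := by exact_mod_cast hn
  rcases le_or_gt n d with hnd | hdn
  · have hnd' : (n : ℝ) ≤ d := by exact_mod_cast hnd
    calc ‖∑ x : ZMod n, ZMod.stdAddChar (∑ j, k j * x ^ ((j : ℕ) + 1))‖
        ≤ ∑ x : ZMod n, (1 : ℝ) := norm_sum_le_of_le _ fun x _ => (AddChar.norm_apply _ _).le
      _ = Real.sqrt n * Real.sqrt n := by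
          rw [Real.mul_self_sqrt (by positivity)]
          simp [ZMod.card]
      _ ≤ _ := by
          refine mul_le_mul_of_nonneg_right ?_ (Real.sqrt_nonneg _)
          rw [Real.sqrt_le_left (by linarith)]
          nlinarith
  · set g : (ZMod n)[X] := ∑ j : Fin d, C (k j) * X ^ ((j : ℕ) + 1) with hg
    have hgc : ∀ j : Fin d, g.coeff ((j : ℕ) + 1) = k j := by
      intro j
      rw [hg, finsetSum_coeff]
      simp only [coeff_C_mul_X_pow, Nat.add_right_cancel_iff, Fin.val_inj]
      simp
    have hg0 : g.coeff 0 = 0 := by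
      rw [hg, finsetSum_coeff]
      simp
    obtain ⟨j, hj⟩ := Function.ne_iff.1 hk
    have hgd : g.natDegree ≤ d := by
      refine natDegree_sum_le_of_forall_le _ _ fun j _ => ?_
      exact (natDegree_C_mul_X_pow_le _ _).trans j.2
    have hg1 : 1 ≤ g.natDegree := by
      have : (j : ℕ) + 1 ≤ g.natDegree := le_natDegree_of_ne_zero (by rw [hgc]; exact hj)
      omega
    have hψ : ZMod.stdAddChar (N := n) ≠ 1 := by
      simpa using ZMod.isPrimitive_stdAddChar n one_ne_zero
    have h := norm_sum_addChar_eval_le hn (ZMod.stdAddChar (N := n))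
      hψ g hg0 hg1 (by omega)
    have heval : ∀ x, g.eval x = ∑ j, k j * x ^ ((j : ℕ) + 1) := by
      intro x
      rw [hg, eval_finsetSum]
      simp
    simp only [heval] at h
    refine h.trans (mul_le_mul_of_nonneg_right ?_ (Real.sqrt_nonneg _))
    have : (g.natDegree : ℝ) ≤ d := by exact_mod_cast hgd
    linarith

/-- The grid average annihilates every character except those with frequency divisible by `n`. -/
theorem sum_grid_stdAddChar (k : Fin d → ZMod n) :
    ((n : ℂ) ^ d)⁻¹ * ∑ j : Fin d → ZMod n, ZMod.stdAddChar (∑ i, k i * j i) =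
      if k = 0 then 1 else 0 := by
  have hn0 : (n : ℂ) ≠ 0 := by exact_mod_cast (Fact.out : n.Prime).ne_zero
  have h1 : ∀ j : Fin d → ZMod n, ZMod.stdAddChar (∑ i, k i * j i) =
      ∏ i, ZMod.stdAddChar (N := n) (j i * k i) := by
    intro j
    simp only [mul_comm (k _)]
    exact map_prod (ZMod.stdAddChar (N := n)).toMonoidHom
      (fun i => Multiplicative.ofAdd (j i * k i)) Finset.univ
  simp only [h1]
  rw [← Fintype.prod_sum fun i (x : ZMod n) => ZMod.stdAddChar (N := n) (x * k i)]
  simp only [AddChar.sum_mulShift _ (ZMod.isPrimitive_stdAddChar n), ZMod.card]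
  split_ifs with hk
  · subst hk
    simp [hn0]
  · obtain ⟨i, hi⟩ := Function.ne_iff.1 hk
    rw [Finset.prod_eq_zero (Finset.mem_univ i), mul_zero]
    rw [if_neg (by simpa using hi), Nat.cast_zero]

/-- On each exponential the curve rule and the full grid rule differ by at most `(d - 1) / √n`. They
agree when the frequency is divisible by `n`, where the curve rule itself has no cancellation. -/
theorem norm_sum_curve_sub_grid_le (hd : 1 ≤ d) (hn : 3 ≤ n) (k : Fin d → ZMod n) :
    ‖(n : ℂ)⁻¹ * (∑ x : ZMod n, ZMod.stdAddChar (∑ j, k j * x ^ ((j : ℕ) + 1))) -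
      ((n : ℂ) ^ d)⁻¹ * ∑ j : Fin d → ZMod n, ZMod.stdAddChar (∑ i, k i * j i)‖ ≤
      ((d : ℝ) - 1) / Real.sqrt n := by
  have hd' : (1 : ℝ) ≤ d := by exact_mod_cast hd
  have hn0 : (0 : ℝ) < n := by exact_mod_cast (Fact.out : n.Prime).pos
  rw [sum_grid_stdAddChar]
  split_ifs with hk
  · subst hk
    have : (n : ℂ) ≠ 0 := by exact_mod_cast hn0.ne'
    simp only [Pi.zero_apply, zero_mul, Finset.sum_const_zero, AddChar.map_zero_eq_one,
      Finset.sum_const, Finset.card_univ, ZMod.card, nsmul_eq_mul, mul_one]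
    rw [inv_mul_cancel₀ this, sub_self, norm_zero]
    have : (0 : ℝ) ≤ d - 1 := by linarith
    positivity
  · rw [sub_zero, norm_mul, norm_inv, Complex.norm_natCast]
    calc (n : ℝ)⁻¹ * ‖∑ x : ZMod n, ZMod.stdAddChar (∑ j, k j * x ^ ((j : ℕ) + 1))‖
        ≤ (n : ℝ)⁻¹ * (((d : ℝ) - 1) * Real.sqrt n) :=
          mul_le_mul_of_nonneg_left (norm_sum_stdAddChar_le hn k hk) (by positivity)
      _ = _ := by
          have hs : 0 < Real.sqrt n := Real.sqrt_pos.2 hn0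
          have hsq : Real.sqrt n * Real.sqrt n = n := Real.mul_self_sqrt hn0.le
          field_simp
          nlinarith

end CharacterSums

/-! ### The quadrature rules -/

section Quadrature

variable {d n : ℕ} {f : (Fin d → ℝ) → ℝ}

/-- The average of `f` over the `n ^ d` points of the grid `v + {0, 1/n, …, (n-1)/n}^d`, indexed by
`(ℤ/n)^d`. -/
noncomputable def gridAvg (n : ℕ) [NeZero n] (f : (Fin d → ℝ) → ℝ) (v : Fin d → ℝ) : ℝ :=
  ((n : ℝ) ^ d)⁻¹ * ∑ j : Fin d → ZMod n, f (v + fun i => ((j i).val : ℝ) / n)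

/-- The grid average is periodic with respect to `(1/n)ℤ^d`. -/
theorem gridAvg_add_int [NeZero n]
    (hper : ∀ (x : Fin d → ℝ) (i : Fin d), f (x + Pi.single i 1) = f x)
    (v : Fin d → ℝ) (m : Fin d → ℤ) :
    gridAvg n f (v + fun i => (m i : ℝ) / n) = gridAvg n f v := by
  have hn0 : (n : ℝ) ≠ 0 := by exact_mod_cast NeZero.ne n
  rw [gridAvg, gridAvg]
  congr 1
  rw [← Equiv.sum_comp (Equiv.addRight fun i => (m i : ZMod n))
    (fun j : Fin d → ZMod n => f (v + fun i => ((j i).val : ℝ) / n))]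
  refine Finset.sum_congr rfl fun j _ => ?_
  have h1 : ∀ i, ∃ z : ℤ, (m i : ℤ) + (j i).val = (j i + m i : ZMod n).val + n * z := by
    intro i
    have h2 : (((m i : ℤ) + (j i).val : ℤ) : ZMod n) = (((j i + m i : ZMod n).val : ℤ) : ZMod n) := by
      push_cast
      simp [add_comm]
    obtain ⟨z, hz⟩ := (ZMod.intCast_eq_intCast_iff_dvd_sub _ _ _).1 h2.symm
    exact ⟨z, by linarith⟩
  choose z hz using h1
  rw [← periodic_int hper (v + fun i => _) z]
  congr 1
  ext i
  have h3 : (m i : ℝ) + (j i).val = (j i + m i : ZMod n).val + n * z i := by exact_mod_cast hz i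
  simp only [Pi.add_apply, Equiv.coe_addRight]
  rw [add_assoc, add_assoc, ← add_div, h3, add_div, mul_div_cancel_left₀ _ hn0]

theorem integral_gridAvg [NeZero n] (hf : Continuous f)
    (hper : ∀ (x : Fin d → ℝ) (i : Fin d), f (x + Pi.single i 1) = f x) :
    ∫ x in Set.Icc (0 : Fin d → ℝ) 1, gridAvg n f x = ∫ x in Set.Icc (0 : Fin d → ℝ) 1, f x := by
  have hn0 : (n : ℝ) ≠ 0 := by exact_mod_cast NeZero.ne n
  simp only [gridAvg]
  rw [integral_const_mul, integral_finsetSum]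
  · simp only [setIntegral_translate hf hper]
    rw [Finset.sum_const, Finset.card_univ, Fintype.card_fun, ZMod.card, Fintype.card_fin,
      nsmul_eq_mul, Nat.cast_pow, inv_mul_cancel_left₀ (pow_ne_zero _ hn0)]
  · intro j _
    exact (Continuous.continuousOn (by fun_prop)).integrableOn_compact isCompact_Icc

theorem abs_setIntegral_sub_le {g : (Fin d → ℝ) → ℝ} (hg : Continuous g) (c M : ℝ)
    (h : ∀ x, |g x - c| ≤ M) : |(∫ x in Set.Icc (0 : Fin d → ℝ) 1, g x) - c| ≤ M := by
  have hvol : (volume : Measure (Fin d → ℝ)).real (Set.Icc 0 1) = 1 := by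
    simp [Measure.real, Real.volume_Icc_pi]
  have h1 : (∫ x in Set.Icc (0 : Fin d → ℝ) 1, (g x - c)) =
      (∫ x in Set.Icc (0 : Fin d → ℝ) 1, g x) - c := by
    rw [integral_sub (hg.continuousOn.integrableOn_compact isCompact_Icc)
      (continuous_const.continuousOn.integrableOn_compact isCompact_Icc)]
    simp [hvol]
  rw [← h1, ← Real.norm_eq_abs]
  have := norm_setIntegral_le_of_norm_le_const (μ := volume) (s := Set.Icc (0 : Fin d → ℝ) 1)
    (f := fun x => g x - c) (C := M) (by simp [Real.volume_Icc_pi]) (fun x _ => h x)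
  rwa [hvol, mul_one] at this

/-- For `p = ∞` the exponent `α / p.toReal` is `α / 0 = 0`, as it should be. -/
theorem abs_sub_le_of_abs_le {α : ℝ} (hα0 : 0 < α) {p : ℝ≥0∞} [Fact (1 ≤ p)] {L : ℝ} (hL0 : 0 ≤ L)
    (hHol : ∀ x h : Fin d → ℝ, h ≠ 0 →
      |f (x + h) - f x| ≤ L * ‖(WithLp.equiv p (Fin d → ℝ)).symm h‖ ^ α)
    (x h : Fin d → ℝ) {r : ℝ} (hr : 0 ≤ r) (hh : ∀ i, |h i| ≤ r) :
    |f (x + h) - f x| ≤ L * ((d : ℝ) ^ (α / p.toReal) * r ^ α) := by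
  rcases eq_or_ne h 0 with rfl | hne
  · rw [add_zero, sub_self, abs_zero]
    positivity
  refine (hHol x h hne).trans (mul_le_mul_of_nonneg_left ?_ hL0)
  have h1 : ‖(WithLp.equiv p (Fin d → ℝ)).symm h‖ ≤ (d : ℝ) ^ (1 / p.toReal) * r := by
    have h2 := (PiLp.lipschitzWith_toLp p (fun _ : Fin d => ℝ)).norm_le_mul (by simp) h
    have h3 : ‖h‖ ≤ r := (pi_norm_le_iff_of_nonneg hr).2 hh
    simp only [Fintype.card_fin, one_div, ENNReal.toReal_inv] at h2
    rw [one_div]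
    refine h2.trans ?_
    push_cast
    exact mul_le_mul_of_nonneg_left h3 (by positivity)
  calc ‖(WithLp.equiv p (Fin d → ℝ)).symm h‖ ^ α ≤ ((d : ℝ) ^ (1 / p.toReal) * r) ^ α :=
        Real.rpow_le_rpow (norm_nonneg _) h1 hα0.le
    _ = _ := by
        rw [Real.mul_rpow (by positivity) hr, ← Real.rpow_mul (by positivity), one_div_mul_eq_div]

/-- The grid average `gridAvg n f` has the same integral as `f` and is `(1/n)ℤ^d`-periodic, so that it
is enough to compare it with its value at `0` at points of `[0, 1/n]^d`. -/
theorem abs_integral_sub_gridAvg_le [NeZero n] (hf : Continuous f)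
    (hper : ∀ (x : Fin d → ℝ) (i : Fin d), f (x + Pi.single i 1) = f x) {M : ℝ}
    (hM : ∀ x h : Fin d → ℝ, (∀ i, |h i| ≤ 1 / n) → |f (x + h) - f x| ≤ M) :
    |(∫ x in Set.Icc (0 : Fin d → ℝ) 1, f x) - gridAvg n f 0| ≤ M := by
  have hn0 : (0 : ℝ) < n := by exact_mod_cast NeZero.pos n
  rw [← integral_gridAvg (n := n) hf hper]
  refine abs_setIntegral_sub_le (by unfold gridAvg; fun_prop) _ _ fun x => ?_
  have hx : x = (fun i => Int.fract (n * x i) / n) + fun i => (⌊n * x i⌋ : ℝ) / n := by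
    ext i
    simp only [Pi.add_apply]
    rw [← add_div, Int.fract_add_floor]
    field_simp
  rw [hx, gridAvg_add_int hper, gridAvg, gridAvg, ← mul_sub, ← Finset.sum_sub_distrib, abs_mul,
    abs_of_nonneg (by positivity)]
  have h1 : |∑ j : Fin d → ZMod n, (f ((fun i => Int.fract (n * x i) / n) +
      fun i => ((j i).val : ℝ) / n) - f (0 + fun i => ((j i).val : ℝ) / n))| ≤ (n : ℝ) ^ d * M := by
    refine (Finset.abs_sum_le_sum_abs _ _).trans ?_
    have h2 := Finset.sum_le_card_nsmul (Finset.univ : Finset (Fin d → ZMod n))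
      (fun j => |f ((fun i => Int.fract (n * x i) / n) +
        fun i => ((j i).val : ℝ) / n) - f (0 + fun i => ((j i).val : ℝ) / n)|) M ?_
    · rwa [Finset.card_univ, Fintype.card_fun, ZMod.card, Fintype.card_fin, nsmul_eq_mul,
        Nat.cast_pow] at h2
    · intro j _
      rw [zero_add, add_comm]
      refine hM _ _ fun i => ?_
      rw [abs_of_nonneg (div_nonneg (Int.fract_nonneg _) hn0.le)]
      exact div_le_div_of_nonneg_right (Int.fract_lt_one _).le hn0.le
  rw [inv_mul_le_iff₀ (by positivity)]
  exact h1

/-- Termwise comparison of the curve rule and the grid rule on the Fourier series of `f`. The points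
of the curve are not reduced modulo `1`, which is harmless as `f` is periodic. -/
theorem abs_curveAvg_sub_gridAvg_le [Fact n.Prime] (hd : 1 ≤ d) (hn : 3 ≤ n) (hf : Continuous f)
    (hper : ∀ (x : Fin d → ℝ) (i : Fin d), f (x + Pi.single i 1) = f x)
    (hsum : Summable fun k : Fin d → ℤ => ‖fourierCoeffCube f k‖) :
    |(1 / n : ℝ) * (∑ x : ZMod n, f (fun j => (x.val : ℝ) ^ ((j : ℕ) + 1) / n)) - gridAvg n f 0| ≤
      (∑' k : Fin d → ℤ, ‖fourierCoeffCube f k‖) * (((d : ℝ) - 1) / Real.sqrt n) := by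
  have hF := hasSum_fourierCoeffCube hf hper hsum
  have h1 : HasSum (fun k : Fin d → ℤ => fourierCoeffCube f k * ((n : ℂ)⁻¹ *
      ∑ x : ZMod n, ZMod.stdAddChar (∑ j, (k j : ZMod n) * x ^ ((j : ℕ) + 1))))
      ((n : ℂ)⁻¹ * ∑ x : ZMod n, (f (fun j => (x.val : ℝ) ^ ((j : ℕ) + 1) / n) : ℂ)) := by
    have h2 := (hasSum_sum (s := (Finset.univ : Finset (ZMod n))) fun x _ =>
      hF (fun j => (x.val : ℝ) ^ ((j : ℕ) + 1) / n)).mul_left (n : ℂ)⁻¹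
    refine h2.congr_fun fun k => ?_
    rw [mul_left_comm, Finset.mul_sum]
    congr 1
    refine Finset.sum_congr rfl fun x _ => ?_
    congr 1
    have h3 := exp_eq_stdAddChar (n := n) k fun j => (x.val : ℤ) ^ ((j : ℕ) + 1)
    push_cast at h3 ⊢
    rw [h3]
    simp
  have h2 : HasSum (fun k : Fin d → ℤ => fourierCoeffCube f k * (((n : ℂ) ^ d)⁻¹ *
      ∑ j : Fin d → ZMod n, ZMod.stdAddChar (∑ i, (k i : ZMod n) * j i)))
      (gridAvg n f 0 : ℂ) := by
    have h2 := (hasSum_sum (s := (Finset.univ : Finset (Fin d → ZMod n))) fun j _ =>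
      hF (0 + fun i => ((j i).val : ℝ) / n)).mul_left ((n : ℂ) ^ d)⁻¹
    have hg : (gridAvg n f 0 : ℂ) = ((n : ℂ) ^ d)⁻¹ * ∑ j : Fin d → ZMod n,
        (f (0 + fun i => ((j i).val : ℝ) / n) : ℂ) := by
      rw [gridAvg]
      push_cast
      rfl
    rw [hg]
    refine h2.congr_fun fun k => ?_
    rw [mul_left_comm, Finset.mul_sum]
    congr 1
    refine Finset.sum_congr rfl fun j _ => ?_
    congr 1
    have h3 := exp_eq_stdAddChar (n := n) k fun i => ((j i).val : ℤ)
    simp only [zero_add]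
    push_cast at h3 ⊢
    rw [h3]
    simp
  have h3 := h1.sub h2
  have h4 := tsum_of_norm_bounded (hsum.hasSum.mul_right (((d : ℝ) - 1) / Real.sqrt n))
    (f := fun k : Fin d → ℤ => fourierCoeffCube f k * ((n : ℂ)⁻¹ *
      ∑ x : ZMod n, ZMod.stdAddChar (∑ j, (k j : ZMod n) * x ^ ((j : ℕ) + 1))) -
      fourierCoeffCube f k * (((n : ℂ) ^ d)⁻¹ *
      ∑ j : Fin d → ZMod n, ZMod.stdAddChar (∑ i, (k i : ZMod n) * j i))) (fun k => by
      rw [← mul_sub, norm_mul]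
      exact mul_le_mul_of_nonneg_left (norm_sum_curve_sub_grid_le hd hn _) (norm_nonneg _))
  rw [h3.tsum_eq] at h4
  rw [← Real.norm_eq_abs, ← Complex.norm_real]
  push_cast
  simpa using h4

end Quadrature

/-! ### The error bound -/

/-- Dick: let `0 < α ≤ 1`, `1 ≤ p ≤ ∞`, and let `f : ℝ^d → ℝ` be continuous,
1-periodic in each variable, with absolutely summable Fourier coefficients and
Hölder constant `L` w.r.t. the `ℓ_p` norm, normalized by `∑_k |f̂(k)| + L ≤ 1`.
Then for every prime `n` the QMC rule with the points
`({k/n}, {k²/n}, …, {k^d/n})`, `k = 0,…,n-1`, has error at most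
`max((d-1)/√n, d^{α/p}/n^α)` (for `p = ∞`, `d^{α/p} = d^0 = 1`). -/
theorem stmt17 (α : ℝ) (hα0 : 0 < α) (hα1 : α ≤ 1)
    (p : ℝ≥0∞) (hp : 1 ≤ p) [Fact (1 ≤ p)]
    (d n : ℕ) (hd : 1 ≤ d) (hn : Nat.Prime n)
    (f : (Fin d → ℝ) → ℝ) (hf : Continuous f)
    (hper : ∀ (x : Fin d → ℝ) (i : Fin d), f (x + Pi.single i 1) = f x)
    (L : ℝ) (hL0 : 0 ≤ L)
    (hHol : ∀ x h : Fin d → ℝ, h ≠ 0 →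
      |f (x + h) - f x| ≤ L * ‖(WithLp.equiv p (Fin d → ℝ)).symm h‖ ^ α)
    (hsum : Summable fun k : Fin d → ℤ => ‖fourierCoeffCube f k‖)
    (hnorm : (∑' k : Fin d → ℤ, ‖fourierCoeffCube f k‖) + L ≤ 1) :
    |(∫ x in Set.Icc (0 : Fin d → ℝ) 1, f x) -
        (1 / n : ℝ) * ∑ k ∈ Finset.range n,
          f (fun j => Int.fract ((k : ℝ) ^ ((j : ℕ) + 1) / n))|
      ≤ max (((d : ℝ) - 1) / Real.sqrt n) ((d : ℝ) ^ (α / p.toReal) / (n : ℝ) ^ α) := by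
  have hnF : Fact n.Prime := ⟨hn⟩
  have hn0 : (0 : ℝ) < n := by exact_mod_cast hn.pos
  have hd' : (0 : ℝ) ≤ (d : ℝ) - 1 := by
    have : (1 : ℝ) ≤ d := by exact_mod_cast hd
    linarith
  have hA0 : 0 ≤ ∑' k : Fin d → ℤ, ‖fourierCoeffCube f k‖ := tsum_nonneg fun _ => norm_nonneg _
  set M : ℝ := (d : ℝ) ^ (α / p.toReal) / (n : ℝ) ^ α with hM
  have hM0 : 0 ≤ M := by positivity
  have hMr : (d : ℝ) ^ (α / p.toReal) * (1 / n : ℝ) ^ α = M := by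
    rw [Real.div_rpow zero_le_one hn0.le, Real.one_rpow, mul_one_div]
  have hhol : ∀ x h : Fin d → ℝ, (∀ i, |h i| ≤ 1 / n) → |f (x + h) - f x| ≤ L * M := by
    intro x h hh
    rw [← hMr]
    exact abs_sub_le_of_abs_le hα0 hL0 hHol x h (by positivity) hh
  rcases hn.two_le.eq_or_lt with rfl | hn3
  -- For `n = 2` every value of `f` is within `L * M` of the integral, because each point of the
  -- torus has a representative in `[-1/2, 1/2]^d`.
  · have hpt : ∀ P : Fin d → ℝ, |(∫ x in Set.Icc (0 : Fin d → ℝ) 1, f x) - f P| ≤ M := by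
      intro P
      rw [← setIntegral_translate hf hper P]
      refine abs_setIntegral_sub_le (by fun_prop) _ _ fun x => ?_
      have h1 := hhol P (fun i => x i - round (x i)) fun i => by
        simpa using abs_sub_round (x i)
      rw [← periodic_int hper (P + _) fun i => round (x i)] at h1
      have h2 : (P + fun i => x i - round (x i)) + (fun i => (round (x i) : ℝ)) = x + P := by
        ext i
        simp only [Pi.add_apply]
        ring
      rw [h2] at h1
      exact h1.trans (mul_le_of_le_one_left hM0 (by linarith))
    refine le_max_of_le_right ?_
    have h0 := hpt (fun j => Int.fract (((0 : ℕ) : ℝ) ^ ((j : ℕ) + 1) / (2 : ℕ)))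
    have h1 := hpt (fun j => Int.fract (((1 : ℕ) : ℝ) ^ ((j : ℕ) + 1) / (2 : ℕ)))
    rw [Finset.sum_range_succ, Finset.sum_range_one]
    rw [abs_le] at h0 h1 ⊢
    push_cast at h0 h1 ⊢
    constructor <;> linarith [h0.1, h0.2, h1.1, h1.2]
  · have hG := abs_integral_sub_gridAvg_le (n := n) hf hper hhol
    have hC := abs_curveAvg_sub_gridAvg_le (n := n) hd hn3 hf hper hsum
    have hpts : ∑ k ∈ Finset.range n, f (fun j => Int.fract ((k : ℝ) ^ ((j : ℕ) + 1) / n)) =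
        ∑ x : ZMod n, f (fun j => (x.val : ℝ) ^ ((j : ℕ) + 1) / n) := by
      refine Finset.sum_bij' (fun k _ => (k : ZMod n)) (fun x _ => x.val) (by simp)
        (fun x _ => Finset.mem_range.2 (ZMod.val_lt x))
        (fun k hk => ZMod.val_cast_of_lt (Finset.mem_range.1 hk))
        (fun x _ => ZMod.natCast_zmod_val x) fun k hk => ?_
      rw [ZMod.val_cast_of_lt (Finset.mem_range.1 hk),
        ← periodic_int hper (fun j => Int.fract ((k : ℝ) ^ ((j : ℕ) + 1) / n))
          fun j => ⌊(k : ℝ) ^ ((j : ℕ) + 1) / n⌋]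
      congr 1
      ext j
      exact Int.fract_add_floor _
    rw [hpts]
    set A := ∑' k : Fin d → ℤ, ‖fourierCoeffCube f k‖ with hA
    set B := ((d : ℝ) - 1) / Real.sqrt n with hB
    calc _ ≤ L * M + A * B := by
          refine (abs_sub_le _ (gridAvg n f 0) _).trans (add_le_add hG ?_)
          rw [abs_sub_comm]
          exact hC
      _ ≤ L * max B M + A * max B M :=
          add_le_add (mul_le_mul_of_nonneg_left (le_max_right _ _) hL0)
            (mul_le_mul_of_nonneg_left (le_max_left _ _) hA0)
      _ ≤ max B M := by
          rw [← add_mul]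
          exact mul_le_of_le_one_left (le_max_of_le_right hM0) (by linarith)
end

section
/- Let k ∈ ℕ and for d ∈ ℕ let F_d^k = { f ∈ C^k(ℝ^d) : ‖D^α f‖_∞ ≤ 1 for every multi-index α ∈ ℕ_0^d with |α| ≤ k }, and let D_d ⊂ ℝ^d be any measurable set of Lebesgue measure 1, with S_d(f) = ∫_{D_d} f(x) dx. Then there exists a constant c_k > 0, depending only on k, such that for all d ∈ ℕ and all ε ∈ (0,1): n(ε, F_d^k) ≥ c_k · (1−ε) · d^{ d/(2k+3) }. In particular, the integration problem over F_d^k suffers from the curse of dimensionality with a super-exponential lower bound. -/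
/-!
The lower bound comes from a fooling function. Given nodes `x₁, …, xₙ`, put `r = σ√d` and let `f₀`
be the truncated linear function of the *Euclidean* distance to the nodes which is `0` within
distance `r` of a node and `1` where all nodes are at distance at least `2r` (`exists_base`); it is
`1/r`-Lipschitz. Convolve `f₀` with a smooth product kernel supported in the cube `[-σ, σ]^d`
(`moll`, `kern`). Points of the cube have Euclidean norm at most `r`, so the mollified function
still vanishes at the nodes and equals `1` at distance at least `3r` from all of them.

Its derivatives satisfy `D^α (f₀ ⋆ K) = f₀ ⋆ D^α K` (`mDerivG_moll`). One of the `|α| ≥ 1`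
derivatives is paid for by the Lipschitz constant `1/(σ√d)` and each remaining one by a factor
`M/σ`, where `M` depends only on `k` and not on `d` because the kernel is a product
(`abs_moll_add_single_le`, `kern_integral_abs_le`). With `σ = M d^{-1/(2k)}` all derivatives of
order at most `k` are bounded by `1` (`scale_ok`), so the function and its negative are in the
class (`memFdkG_moll`).

Both functions produce zero data, hence `∫_D f ≤ ε`. On the other hand `∫_D f ≥ 1 - n V`, where `V`
is the volume of a Euclidean ball of radius `3σ√d`, and comparison with a Gaussian gives
`V ≤ (C σ)^d = (C M)^d d^{-d/(2k)}` (`volume_eDist_ball_le`, `one_sub_le_card_mul`). Since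
`1/(2k) > 1/(2k+3)`, the exponential factor `(C M)^d` is absorbed (`exists_absorb`).
-/

open MeasureTheory Set

/-- First-order partial derivative in direction `i` on `ℝ^d`. -/
noncomputable def pdG (d : ℕ) (i : Fin d) (f : (Fin d → ℝ) → ℝ) : (Fin d → ℝ) → ℝ :=
  fun x => fderiv ℝ f x (Pi.single i 1)

/-- `m`-fold partial derivative in direction `i` on `ℝ^d`. -/
noncomputable def pdGIter (d : ℕ) (i : Fin d) : ℕ → ((Fin d → ℝ) → ℝ) → ((Fin d → ℝ) → ℝ)
  | 0, f => f
  | m + 1, f => pdG d i (pdGIter d i m f)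

/-- The partial derivative `D^α f` for a multi-index `α`, on `ℝ^d`. -/
noncomputable def mDerivG {d : ℕ} (α : Fin d → ℕ) (f : (Fin d → ℝ) → ℝ) : (Fin d → ℝ) → ℝ :=
  (List.finRange d).foldr (fun i g => pdGIter d i (α i) g) f

/-- Membership in `F_d^k`: `f ∈ C^k(ℝ^d)` with `‖D^α f‖_∞ ≤ 1` for all `|α| ≤ k`. -/
def memFdkG (d k : ℕ) (f : (Fin d → ℝ) → ℝ) : Prop :=
  ContDiff ℝ k f ∧
    ∀ α : Fin d → ℕ, (∑ i, α i) ≤ k → ∀ x : Fin d → ℝ, |mDerivG α f x| ≤ 1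

open scoped Convolution ContDiff

/-! ### The mollifier -/

/-- A smooth nonnegative bump on `ℝ` with integral `1`, supported in `[-1, 1]`. -/
noncomputable def stdBump : ℝ → ℝ :=
  ContDiffBump.normed (⟨1 / 2, 1, by norm_num, by norm_num⟩ : ContDiffBump (0 : ℝ)) volume

lemma stdBump_contDiff : ContDiff ℝ ∞ stdBump :=
  ContDiffBump.contDiff_normed _

lemma stdBump_nonneg (t : ℝ) : 0 ≤ stdBump t :=
  ContDiffBump.nonneg_normed _ _

lemma stdBump_integral : ∫ t, stdBump t = 1 :=
  ContDiffBump.integral_normed _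

lemma tsupport_iteratedDeriv_stdBump (b : ℕ) :
    tsupport (iteratedDeriv b stdBump) ⊆ Metric.closedBall 0 1 := by
  induction b with
  | zero =>
    rw [iteratedDeriv_zero]
    exact (ContDiffBump.tsupport_normed_eq _).subset
  | succ b ih =>
    rw [iteratedDeriv_succ]
    exact (closure_minimal support_deriv_subset (isClosed_tsupport _)).trans ih

lemma stdBump_iteratedDeriv_contDiff (b : ℕ) : ContDiff ℝ ∞ (iteratedDeriv b stdBump) := by
  induction b with
  | zero => rw [iteratedDeriv_zero]; exact stdBump_contDiff
  | succ b ih =>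
    rw [iteratedDeriv_succ]
    exact (contDiff_infty_iff_deriv.1 ih).2

/-- The `b`-th derivative of the rescaled bump `t ↦ s φ(s t)`. -/
noncomputable def bumpD (s : ℝ) (b : ℕ) (t : ℝ) : ℝ :=
  s ^ (b + 1) * iteratedDeriv b stdBump (s * t)

lemma bumpD_contDiff (s : ℝ) (b : ℕ) : ContDiff ℝ ∞ (bumpD s b) := by
  have h := stdBump_iteratedDeriv_contDiff b
  unfold bumpD
  fun_prop

lemma bumpD_hasDerivAt (s : ℝ) (b : ℕ) (t : ℝ) :
    HasDerivAt (bumpD s b) (bumpD s (b + 1) t) t := by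
  have h : HasDerivAt (iteratedDeriv b stdBump) (iteratedDeriv (b + 1) stdBump (s * t)) (s * t) := by
    rw [iteratedDeriv_succ]
    exact ((stdBump_iteratedDeriv_contDiff b).differentiable (by simp) _).hasDerivAt
  have h2 : HasDerivAt (fun t : ℝ => s * t) s t := by
    simpa using (hasDerivAt_id t).const_mul s
  have h3 := (h.comp t h2).const_mul (s ^ (b + 1))
  refine h3.congr_deriv ?_
  simp only [bumpD]
  ring

lemma bumpD_eq_zero {σ : ℝ} (hσ : 0 < σ) (b : ℕ) {t : ℝ} (ht : σ < |t|) :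
    bumpD σ⁻¹ b t = 0 := by
  have : iteratedDeriv b stdBump (σ⁻¹ * t) = 0 := by
    apply image_eq_zero_of_notMem_tsupport
    intro h
    have h1 := tsupport_iteratedDeriv_stdBump b h
    rw [mem_closedBall_zero_iff, Real.norm_eq_abs, abs_mul, abs_of_pos (inv_pos.2 hσ),
      inv_mul_le_iff₀ hσ] at h1
    linarith
  simp [bumpD, this]

lemma bumpD_hasCompactSupport {σ : ℝ} (hσ : 0 < σ) (b : ℕ) :
    HasCompactSupport (bumpD σ⁻¹ b) := by
  refine HasCompactSupport.intro (isCompact_closedBall (0 : ℝ) σ) fun t ht => ?_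
  apply bumpD_eq_zero hσ
  simpa using ht

lemma bumpD_integrable {σ : ℝ} (hσ : 0 < σ) (b : ℕ) : Integrable (bumpD σ⁻¹ b) :=
  (bumpD_contDiff _ b).continuous.integrable_of_hasCompactSupport (bumpD_hasCompactSupport hσ b)

lemma bumpD_integral {σ : ℝ} (hσ : 0 < σ) : ∫ t, bumpD σ⁻¹ 0 t = 1 := by
  simp only [bumpD, iteratedDeriv_zero, zero_add, pow_one]
  rw [integral_const_mul, Measure.integral_comp_mul_left, stdBump_integral]
  simp [abs_of_pos hσ, hσ.ne']

lemma bumpD_nonneg {σ : ℝ} (hσ : 0 < σ) (t : ℝ) : 0 ≤ bumpD σ⁻¹ 0 t := by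
  have := stdBump_nonneg (σ⁻¹ * t)
  simp only [bumpD, iteratedDeriv_zero]
  positivity

lemma bumpD_integral_abs {σ : ℝ} (hσ : 0 < σ) (b : ℕ) :
    ∫ t, |bumpD σ⁻¹ b t| = σ⁻¹ ^ b * ∫ t, |iteratedDeriv b stdBump t| := by
  have : ∀ t, |bumpD σ⁻¹ b t| = σ⁻¹ ^ (b + 1) * |iteratedDeriv b stdBump (σ⁻¹ * t)| := by
    intro t
    rw [bumpD, abs_mul, abs_of_pos (by positivity)]
  simp_rw [this]
  rw [integral_const_mul,
    Measure.integral_comp_mul_left (fun t => |iteratedDeriv b stdBump t|)]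
  simp only [inv_inv, abs_of_pos hσ, smul_eq_mul, pow_succ]
  field_simp

/-- The constant `M_k ≥ 1` dominating the `L¹` norms of all derivatives of the bump of order
`≤ k`. -/
noncomputable def bumpM (k : ℕ) : ℝ :=
  1 + ∑ b ∈ Finset.range (k + 1), ∫ t, |iteratedDeriv b stdBump t|

lemma one_le_bumpM (k : ℕ) : 1 ≤ bumpM k := by
  unfold bumpM
  have : 0 ≤ ∑ b ∈ Finset.range (k + 1), ∫ t, |iteratedDeriv b stdBump t| :=
    Finset.sum_nonneg fun b _ => integral_nonneg fun t => abs_nonneg _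
  linarith

lemma bumpD_integral_abs_le {σ : ℝ} (hσ : 0 < σ) {b k : ℕ} (hb : b ≤ k) :
    ∫ t, |bumpD σ⁻¹ b t| ≤ (bumpM k * σ⁻¹) ^ b := by
  rcases Nat.eq_zero_or_pos b with rfl | hb0
  · simp_rw [abs_of_nonneg (bumpD_nonneg hσ _)]
    rw [bumpD_integral hσ, pow_zero]
  · rw [bumpD_integral_abs hσ, mul_pow, mul_comm]
    have h1 : ∫ t, |iteratedDeriv b stdBump t| ≤ bumpM k := by
      unfold bumpM
      have := Finset.single_le_sum (f := fun b => ∫ t, |iteratedDeriv b stdBump t|)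
        (fun b _ => integral_nonneg fun t => abs_nonneg _)
        (Finset.mem_range.2 (Nat.lt_succ_of_le hb))
      linarith
    have h2 : bumpM k ≤ bumpM k ^ b := le_self_pow₀ (one_le_bumpM k) hb0.ne'
    gcongr
    exact h1.trans h2

/-- The `β`-th partial derivative of the product mollifier on `ℝ^d` at scale `σ`. -/
noncomputable def kern {d : ℕ} (σ : ℝ) (β : Fin d → ℕ) (u : Fin d → ℝ) : ℝ :=
  ∏ i, bumpD σ⁻¹ (β i) (u i)

lemma kern_contDiff {d : ℕ} (σ : ℝ) (β : Fin d → ℕ) : ContDiff ℝ ∞ (kern σ β) := by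
  unfold kern
  refine contDiff_prod fun i _ => ?_
  exact (bumpD_contDiff _ _).comp (contDiff_apply ℝ ℝ i)

lemma kern_eq_zero {d : ℕ} {σ : ℝ} (hσ : 0 < σ) (β : Fin d → ℕ) {u : Fin d → ℝ}
    {i : Fin d} (hi : σ < |u i|) : kern σ β u = 0 :=
  Finset.prod_eq_zero (Finset.mem_univ i) (bumpD_eq_zero hσ _ hi)

lemma kern_hasCompactSupport {d : ℕ} {σ : ℝ} (hσ : 0 < σ) (β : Fin d → ℕ) :
    HasCompactSupport (kern σ β) := by
  refine HasCompactSupport.intro (isCompact_closedBall (0 : Fin d → ℝ) σ) fun u hu => ?_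
  rw [mem_closedBall_zero_iff, pi_norm_le_iff_of_nonneg hσ.le] at hu
  push Not at hu
  obtain ⟨i, hi⟩ := hu
  exact kern_eq_zero hσ β hi

lemma kern_integrable {d : ℕ} {σ : ℝ} (hσ : 0 < σ) (β : Fin d → ℕ) : Integrable (kern σ β) :=
  (kern_contDiff σ β).continuous.integrable_of_hasCompactSupport (kern_hasCompactSupport hσ β)

lemma kern_integral {d : ℕ} {σ : ℝ} (hσ : 0 < σ) : ∫ u, kern σ (0 : Fin d → ℕ) u = 1 := by
  unfold kern
  simp [integral_fintype_prod_volume_eq_prod, bumpD_integral hσ]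

lemma kern_nonneg {d : ℕ} {σ : ℝ} (hσ : 0 < σ) (u : Fin d → ℝ) :
    0 ≤ kern σ (0 : Fin d → ℕ) u :=
  Finset.prod_nonneg fun _ _ => bumpD_nonneg hσ _

lemma kern_integral_abs_le {d k : ℕ} {σ : ℝ} (hσ : 0 < σ) {β : Fin d → ℕ}
    (hβ : ∑ i, β i ≤ k) : ∫ u, |kern σ β u| ≤ (bumpM k * σ⁻¹) ^ (∑ i, β i) := by
  unfold kern
  simp_rw [Finset.abs_prod]
  rw [integral_fintype_prod_volume_eq_prod (fun i t => |bumpD σ⁻¹ (β i) t|),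
    ← Finset.prod_pow_eq_pow_sum]
  refine Finset.prod_le_prod (fun i _ => integral_nonneg fun t => abs_nonneg _) fun i _ => ?_
  exact bumpD_integral_abs_le hσ
    ((Finset.single_le_sum (fun _ _ => Nat.zero_le _) (Finset.mem_univ i)).trans hβ)

lemma fderiv_kern {d : ℕ} (σ : ℝ) (β : Fin d → ℕ) (i : Fin d) (u : Fin d → ℝ) :
    fderiv ℝ (kern σ β) u (Pi.single i 1) = kern σ (β + Pi.single i 1) u := by
  have h : ∀ j ∈ (Finset.univ : Finset (Fin d)),
      HasFDerivAt (fun u : Fin d → ℝ => bumpD σ⁻¹ (β j) (u j))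
        (bumpD σ⁻¹ (β j + 1) (u j) • (ContinuousLinearMap.proj j : (Fin d → ℝ) →L[ℝ] ℝ)) u :=
    fun j _ => HasDerivAt.comp_hasFDerivAt (h₂ := bumpD σ⁻¹ (β j)) u
      (bumpD_hasDerivAt σ⁻¹ (β j) (u j)) (hasFDerivAt_apply j u)
  have h2 := (HasFDerivAt.finsetProd h).fderiv
  have h3 : kern σ β = fun u => ∏ j, bumpD σ⁻¹ (β j) (u j) := rfl
  rw [h3, h2]
  simp only [sum_apply, smul_apply,
    ContinuousLinearMap.proj_apply, smul_eq_mul]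
  rw [Finset.sum_eq_single i]
  · unfold kern
    rw [← Finset.mul_prod_erase Finset.univ _ (Finset.mem_univ i), mul_comm]
    simp only [Pi.single_eq_same, Pi.add_apply, mul_one]
    congr 1
    refine Finset.prod_congr rfl fun j hj => ?_
    rw [Pi.single_eq_of_ne (Finset.ne_of_mem_erase hj), add_zero]
  · intro j _ hj
    rw [Pi.single_eq_of_ne hj]
    simp
  · simp

/-! ### Mollified functions and their partial derivatives -/

/-- The convolution of `f` with the `β`-th derivative of the mollifier; this is the `β`-th
derivative of the mollification of `f`. -/
noncomputable def moll {d : ℕ} (σ : ℝ) (f : (Fin d → ℝ) → ℝ) (β : Fin d → ℕ) :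
    (Fin d → ℝ) → ℝ :=
  f ⋆[ContinuousLinearMap.lsmul ℝ ℝ, volume] kern σ β

lemma moll_apply {d : ℕ} (σ : ℝ) (f : (Fin d → ℝ) → ℝ) (β : Fin d → ℕ) (x : Fin d → ℝ) :
    moll σ f β x = ∫ u, f (x - u) * kern σ β u := by
  simp [moll, convolution_lsmul_swap]

lemma moll_contDiff {d : ℕ} {σ : ℝ} (hσ : 0 < σ) {f : (Fin d → ℝ) → ℝ} (hf : Continuous f)
    (β : Fin d → ℕ) : ContDiff ℝ ∞ (moll σ f β) :=
  (kern_hasCompactSupport hσ β).contDiff_convolution_right _ hf.locallyIntegrable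
    (kern_contDiff σ β)

lemma pdG_moll {d : ℕ} {σ : ℝ} (hσ : 0 < σ) {f : (Fin d → ℝ) → ℝ} (hf : Continuous f)
    (β : Fin d → ℕ) (i : Fin d) : pdG d i (moll σ f β) = moll σ f (β + Pi.single i 1) := by
  funext x
  have hc := kern_hasCompactSupport hσ β
  have h1 : ContDiff ℝ 1 (kern σ β) := (kern_contDiff σ β).of_le (by simp)
  have h := (hc.hasFDerivAt_convolution_right (μ := volume) (ContinuousLinearMap.lsmul ℝ ℝ)
    hf.locallyIntegrable h1 x).fderiv
  unfold pdG moll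
  rw [h, convolution_precompR_apply _ hf.locallyIntegrable (hc.fderiv ℝ)
    (h1.continuous_fderiv one_ne_zero)]
  simp_rw [fderiv_kern]

lemma pdGIter_moll {d : ℕ} {σ : ℝ} (hσ : 0 < σ) {f : (Fin d → ℝ) → ℝ} (hf : Continuous f)
    (β : Fin d → ℕ) (i : Fin d) (m : ℕ) :
    pdGIter d i m (moll σ f β) = moll σ f (β + Pi.single i m) := by
  induction m with
  | zero => simp [pdGIter]
  | succ m ih => rw [pdGIter, ih, pdG_moll hσ hf, add_assoc, ← Pi.single_add]

lemma mDerivG_moll {d : ℕ} {σ : ℝ} (hσ : 0 < σ) {f : (Fin d → ℝ) → ℝ} (hf : Continuous f)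
    (α : Fin d → ℕ) : mDerivG α (moll σ f 0) = moll σ f α := by
  have key : ∀ l : List (Fin d),
      l.foldr (fun i g => pdGIter d i (α i) g) (moll σ f 0) =
        moll σ f (l.map fun i => Pi.single i (α i)).sum := by
    intro l
    induction l with
    | nil => simp
    | cons i l ih =>
      rw [List.foldr_cons, ih, pdGIter_moll hσ hf, List.map_cons, List.sum_cons, add_comm]
  rw [mDerivG, key, ← List.ofFn_eq_map, List.sum_ofFn, Finset.univ_sum_single]

lemma moll_integrable {d : ℕ} {σ : ℝ} (hσ : 0 < σ) {f : (Fin d → ℝ) → ℝ} (hf : Continuous f)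
    (β : Fin d → ℕ) (x : Fin d → ℝ) : Integrable fun u => f (x - u) * kern σ β u := by
  have h1 := (kern_contDiff σ β).continuous
  refine Continuous.integrable_of_hasCompactSupport (by fun_prop) ?_
  exact (kern_hasCompactSupport hσ β).mul_left

lemma abs_moll_sub_le {d : ℕ} {σ : ℝ} (hσ : 0 < σ) {f : (Fin d → ℝ) → ℝ} (hf : Continuous f)
    (β : Fin d → ℕ) {x y : Fin d → ℝ} {B : ℝ} (h : ∀ u, |f (x - u) - f (y - u)| ≤ B) :
    |moll σ f β x - moll σ f β y| ≤ B * ∫ u, |kern σ β u| := by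
  rw [moll_apply, moll_apply,
    ← integral_sub (moll_integrable hσ hf β x) (moll_integrable hσ hf β y),
    ← integral_const_mul]
  refine (abs_integral_le_integral_abs).trans ?_
  refine integral_mono_of_nonneg (Filter.Eventually.of_forall fun _ => abs_nonneg _)
    ((kern_integrable hσ β).abs.const_mul B) (Filter.Eventually.of_forall fun u => ?_)
  simp only
  rw [← sub_mul, abs_mul]
  gcongr
  exact h u

lemma moll_eq_of_forall {d : ℕ} {σ : ℝ} (hσ : 0 < σ) {f : (Fin d → ℝ) → ℝ} {c : ℝ}
    {x : Fin d → ℝ} (h : ∀ u : Fin d → ℝ, (∀ i, |u i| ≤ σ) → f (x - u) = c) :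
    moll σ f 0 x = c := by
  have : ∀ u, f (x - u) * kern σ 0 u = c * kern σ 0 u := by
    intro u
    by_cases hu : ∀ i, |u i| ≤ σ
    · rw [h u hu]
    · push Not at hu
      obtain ⟨i, hi⟩ := hu
      rw [kern_eq_zero hσ 0 hi]
      simp
  rw [moll_apply]
  simp_rw [this]
  rw [integral_const_mul, kern_integral hσ, mul_one]

lemma moll_nonneg {d : ℕ} {σ : ℝ} (hσ : 0 < σ) {f : (Fin d → ℝ) → ℝ} (h : ∀ y, 0 ≤ f y)
    (x : Fin d → ℝ) : 0 ≤ moll σ f 0 x := by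
  rw [moll_apply]
  exact integral_nonneg fun u => mul_nonneg (h _) (kern_nonneg hσ u)

lemma abs_moll_zero_le {d : ℕ} {σ : ℝ} (hσ : 0 < σ) {f : (Fin d → ℝ) → ℝ}
    (h : ∀ y, |f y| ≤ 1) (x : Fin d → ℝ) : |moll σ f 0 x| ≤ 1 := by
  rw [moll_apply, ← kern_integral (d := d) hσ]
  refine (abs_integral_le_integral_abs).trans ?_
  refine integral_mono_of_nonneg (Filter.Eventually.of_forall fun _ => abs_nonneg _)
    (kern_integrable hσ 0) (Filter.Eventually.of_forall fun u => ?_)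
  simp only
  rw [abs_mul, abs_of_nonneg (kern_nonneg hσ u)]
  exact mul_le_of_le_one_left (kern_nonneg hσ u) (h _)

/-- One derivative is paid for by the Lipschitz constant of `f`, the remaining ones by the
mollifier. -/
lemma abs_moll_add_single_le {d : ℕ} {σ L : ℝ} (hσ : 0 < σ) (hL : 0 ≤ L)
    {f : (Fin d → ℝ) → ℝ} (hf : Continuous f)
    (hlip : ∀ (y : Fin d → ℝ) (i : Fin d) (t : ℝ), |f (y + Pi.single i t) - f y| ≤ L * |t|)
    (β : Fin d → ℕ) (i : Fin d) (x : Fin d → ℝ) :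
    |moll σ f (β + Pi.single i 1) x| ≤ L * ∫ u, |kern σ β u| := by
  have hI : 0 ≤ ∫ u, |kern σ β u| := integral_nonneg fun _ => abs_nonneg _
  rw [← pdG_moll hσ hf, pdG]
  have h1 : HasFDerivAt (moll σ f β) (fderiv ℝ (moll σ f β) x) (x + Pi.single i 0) := by
    rw [Pi.single_zero, add_zero]
    exact ((moll_contDiff hσ hf β).differentiable (by simp) x).hasFDerivAt
  have h2 : HasDerivAt (fun t : ℝ => x + (Pi.single i t : Fin d → ℝ)) (Pi.single i 1) 0 :=
    (hasDerivAt_single i 0).const_add x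
  have h3 := h1.comp_hasDerivAt (0 : ℝ) h2
  refine h3.le_of_lip' (mul_nonneg hL hI) (Filter.Eventually.of_forall fun t => ?_)
  simp only [Function.comp, Pi.single_zero, add_zero, sub_zero, Real.norm_eq_abs]
  refine (abs_moll_sub_le hσ hf β (B := L * |t|) fun u => ?_).trans (le_of_eq (by ring))
  rw [show x + Pi.single i t - u = (x - u) + Pi.single i t by abel]
  exact hlip _ _ _

lemma memFdkG_moll {d k : ℕ} {σ L : ℝ} (hσ : 0 < σ) (hL : 0 ≤ L)
    {f : (Fin d → ℝ) → ℝ} (hf : Continuous f) (hf1 : ∀ y, |f y| ≤ 1)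
    (hlip : ∀ (y : Fin d → ℝ) (i : Fin d) (t : ℝ), |f (y + Pi.single i t) - f y| ≤ L * |t|)
    (hLσ : ∀ j < k, L * (bumpM k * σ⁻¹) ^ j ≤ 1) : memFdkG d k (moll σ f 0) := by
  refine ⟨(moll_contDiff hσ hf 0).of_le (by exact_mod_cast le_top), fun α hα x => ?_⟩
  rw [mDerivG_moll hσ hf]
  by_cases h0 : α = 0
  · rw [h0]; exact abs_moll_zero_le hσ hf1 x
  · obtain ⟨i, hi⟩ := Function.ne_iff.1 h0
    obtain ⟨β, rfl⟩ : ∃ β : Fin d → ℕ, α = β + Pi.single i 1 := by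
      refine ⟨α - Pi.single i 1, ?_⟩
      funext j
      by_cases hj : j = i
      · subst hj
        simp only [Pi.zero_apply] at hi
        simp only [Pi.add_apply, Pi.sub_apply, Pi.single_eq_same]
        omega
      · simp [hj]
    have hs : ∑ j, β j + 1 ≤ k := by
      simpa [Finset.sum_add_distrib] using hα
    refine (abs_moll_add_single_le hσ hL hf hlip β i x).trans ?_
    refine le_trans ?_ (hLσ (∑ j, β j) hs)
    gcongr
    exact kern_integral_abs_le hσ (by omega)

/-! ### The fooling function -/

/-- Euclidean distance on `Fin d → ℝ`, whose own metric is the sup metric. -/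
noncomputable def eDist {d : ℕ} (x y : Fin d → ℝ) : ℝ :=
  dist (WithLp.toLp 2 x : EuclideanSpace ℝ (Fin d)) (WithLp.toLp 2 y)

lemma eDist_sub_self_le {d : ℕ} {σ : ℝ} (hσ : 0 ≤ σ) (x u : Fin d → ℝ) (hu : ∀ i, |u i| ≤ σ) :
    eDist (x - u) x ≤ σ * √d := by
  rw [eDist, EuclideanSpace.dist_eq]
  apply Real.sqrt_le_iff.2
  refine ⟨by positivity, ?_⟩
  rw [mul_pow, Real.sq_sqrt (Nat.cast_nonneg d)]
  calc ∑ i, dist ((x - u) i) (x i) ^ 2 ≤ ∑ _i : Fin d, σ ^ 2 := by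
        refine Finset.sum_le_sum fun i _ => ?_
        have : dist ((x - u) i) (x i) = |u i| := by simp
        rw [this]
        exact pow_le_pow_left₀ (abs_nonneg _) (hu i) 2
    _ = σ ^ 2 * d := by simp [mul_comm]

/-- The truncated linear function of the distance to the nodes: `0` within distance `r` of some
node and `1` where all nodes are at distance at least `2r`. -/
lemma exists_base {d n : ℕ} (x : Fin n → Fin d → ℝ) {r : ℝ} (hr : 0 < r) :
    ∃ f : (Fin d → ℝ) → ℝ, Continuous f ∧ (∀ y, 0 ≤ f y) ∧ (∀ y, f y ≤ 1) ∧
      (∀ (y : Fin d → ℝ) (i : Fin d) (t : ℝ), |f (y + Pi.single i t) - f y| ≤ r⁻¹ * |t|) ∧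
      (∀ y i, eDist y (x i) ≤ r → f y = 0) ∧
      (∀ y, (∀ i, 2 * r ≤ eDist y (x i)) → f y = 1) := by
  rcases Nat.eq_zero_or_pos n with rfl | hn
  · refine ⟨fun _ => 1, continuous_const, fun _ => zero_le_one, fun _ => le_rfl,
      fun y i t => ?_, fun y i => i.elim0, fun _ _ => rfl⟩
    simp only [sub_self, abs_zero]
    positivity
  let P : Set (EuclideanSpace ℝ (Fin d)) := range fun i => WithLp.toLp 2 (x i)
  have hP : P.Nonempty := ⟨_, ⟨⟨0, hn⟩, rfl⟩⟩
  let T : (Fin d → ℝ) → ℝ := fun y => Metric.infDist (WithLp.toLp 2 y) P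
  have hT : Continuous T :=
    (Metric.continuous_infDist_pt P).comp (PiLp.continuous_toLp 2 _)
  refine ⟨fun y => max 0 (min 1 (r⁻¹ * (T y - r))), by fun_prop, fun y => le_max_left _ _,
    fun y => max_le zero_le_one (min_le_left _ _), fun y i t => ?_, fun y i h => ?_,
    fun y h => ?_⟩
  · have h1 : |T (y + Pi.single i t) - T y| ≤ |t| := by
      have h2 := (Metric.lipschitz_infDist_pt P).dist_le_mul
        (WithLp.toLp 2 (y + Pi.single i t)) (WithLp.toLp 2 y)
      have h3 : dist (WithLp.toLp 2 (y + Pi.single i t) : EuclideanSpace ℝ (Fin d))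
          (WithLp.toLp 2 y) = |t| := by
        rw [dist_eq_norm, ← WithLp.toLp_sub, add_sub_cancel_left]
        simp
      rwa [h3, Real.dist_eq, NNReal.coe_one, one_mul] at h2
    have h4 : |r⁻¹ * (T (y + Pi.single i t) - r) - r⁻¹ * (T y - r)| ≤ r⁻¹ * |t| := by
      rw [← mul_sub, abs_mul, abs_of_pos (inv_pos.2 hr), sub_sub_sub_cancel_right]
      gcongr
    have h5 : ∀ a b : ℝ, |max 0 (min 1 a) - max 0 (min 1 b)| ≤ |a - b| := by
      intro a b
      rw [abs_le]
      rcases abs_cases (a - b) with ⟨h, _⟩ | ⟨h, _⟩ <;> rw [h] <;> constructor <;> grind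
    exact (h5 _ _).trans h4
  · have h1 : T y ≤ r := (Metric.infDist_le_dist_of_mem (mem_range_self i)).trans h
    have h2 : r⁻¹ * (T y - r) ≤ 0 :=
      mul_nonpos_of_nonneg_of_nonpos (inv_pos.2 hr).le (by linarith)
    exact max_eq_left ((min_le_right _ _).trans h2)
  · have h1 : 2 * r ≤ T y := by
      refine (Metric.le_infDist hP).2 ?_
      rintro _ ⟨i, rfl⟩
      exact h i
    have h2 : 1 ≤ r⁻¹ * (T y - r) := by
      rw [← inv_mul_cancel₀ hr.ne']
      gcongr
      linarith
    simp only
    rw [min_eq_left h2, max_eq_right zero_le_one]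

/-- Chernoff-type bound: the Euclidean ball of radius `3σ√d` is dominated by a multiple of the
Gaussian density, which factorizes over the coordinates. -/
lemma volume_eDist_ball_le {d : ℕ} {σ : ℝ} (hσ : 0 < σ) (p : Fin d → ℝ) :
    volume {y : Fin d → ℝ | eDist y p < 3 * (σ * √d)} ≤
      ENNReal.ofReal ((Real.exp (1 / 2) * √(18 * Real.pi) * σ) ^ d) := by
  let b : ℝ := (18 * σ ^ 2)⁻¹
  have hb : 0 < b := by positivity
  let g : (Fin d → ℝ) → ℝ := fun y =>
    ∏ i, (Real.exp (1 / 2) * Real.exp (-b * (y i - p i) ^ 2))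
  have hgi : Integrable g := by
    refine Integrable.fintype_prod_dep (f := fun i t => Real.exp (1 / 2) *
      Real.exp (-b * (t - p i) ^ 2)) fun i => ?_
    exact ((integrable_exp_neg_mul_sq hb).comp_sub_right (p i)).const_mul _
  have hg0 : ∀ y, 0 ≤ g y := fun y => Finset.prod_nonneg fun i _ => by positivity
  have hgI : ∫ y, g y = (Real.exp (1 / 2) * √(18 * Real.pi) * σ) ^ d := by
    rw [integral_fintype_prod_volume_eq_prod (fun i t => Real.exp (1 / 2) *
      Real.exp (-b * (t - p i) ^ 2))]
    have : ∀ i, ∫ t : ℝ, Real.exp (1 / 2) * Real.exp (-b * (t - p i) ^ 2) =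
        Real.exp (1 / 2) * √(18 * Real.pi) * σ := by
      intro i
      rw [integral_const_mul, integral_sub_right_eq_self (fun t => Real.exp (-b * t ^ 2)),
        integral_gaussian, mul_assoc]
      congr 1
      have : Real.pi / b = 18 * Real.pi * σ ^ 2 := by
        simp only [b]; field_simp
      rw [this, Real.sqrt_mul (by positivity), Real.sqrt_sq hσ.le]
    rw [Finset.prod_congr rfl fun i _ => this i, Finset.prod_const, Finset.card_univ,
      Fintype.card_fin]
  have hsub : {y : Fin d → ℝ | eDist y p < 3 * (σ * √d)} ⊆
      {y | 1 ≤ ENNReal.ofReal (g y)} := by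
    intro y hy
    have hy : eDist y p < 3 * (σ * √d) := hy
    rw [eDist, EuclideanSpace.dist_eq, Real.sqrt_lt' (lt_of_le_of_lt (Real.sqrt_nonneg _) hy)] at hy
    have h1 : ∑ i, (y i - p i) ^ 2 < 9 * σ ^ 2 * d := by
      have : (3 * (σ * √d)) ^ 2 = 9 * σ ^ 2 * d := by
        rw [mul_pow, mul_pow, Real.sq_sqrt (Nat.cast_nonneg d)]; ring
      rw [this] at hy
      simpa [Real.dist_eq] using hy
    simp only [mem_ofPred_eq, ENNReal.one_le_ofReal, g]
    simp_rw [← Real.exp_add]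
    rw [← Real.exp_sum, Real.one_le_exp_iff, Finset.sum_add_distrib, ← Finset.mul_sum]
    have h2 : b * ∑ i, (y i - p i) ^ 2 ≤ b * (9 * σ ^ 2 * d) := by gcongr
    have h3 : b * (9 * σ ^ 2 * d) = d / 2 := by
      simp only [b]; field_simp; ring
    simp only [Finset.sum_const, Finset.card_univ, Fintype.card_fin, nsmul_eq_mul]
    linarith
  calc volume {y : Fin d → ℝ | eDist y p < 3 * (σ * √d)}
      ≤ 1 * volume {y | 1 ≤ ENNReal.ofReal (g y)} := by
        rw [one_mul]; exact measure_mono hsub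
    _ ≤ ∫⁻ y, ENNReal.ofReal (g y) :=
        mul_meas_ge_le_lintegral₀ hgi.aemeasurable.ennreal_ofReal 1
    _ = _ := by
        rw [← ofReal_integral_eq_lintegral_ofReal hgi (Filter.Eventually.of_forall hg0), hgI]

/-- Two opposite functions of the class vanish at all nodes and have integrals `± I` with
`I ≥ 1 - n V`, where `V` bounds the volume of a ball around a node; hence `1 - e ≤ n V`. -/
lemma one_sub_le_card_mul {d k n : ℕ} (hd : 1 ≤ d) {σ : ℝ} (hσ : 0 < σ)
    (hLσ : ∀ j < k, (σ * √d)⁻¹ * (bumpM k * σ⁻¹) ^ j ≤ 1)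
    {D : Set (Fin d → ℝ)} (hD : MeasurableSet D) (hD1 : volume D = 1)
    (x : Fin n → Fin d → ℝ) (φ : (Fin n → ℝ) → ℝ) {e : ℝ}
    (h : ∀ f : (Fin d → ℝ) → ℝ, memFdkG d k f →
      |(∫ z in D, f z) - φ (fun i => f (x i))| ≤ e) :
    1 - e ≤ n * (Real.exp (1 / 2) * √(18 * Real.pi) * σ) ^ d := by
  set V := (Real.exp (1 / 2) * √(18 * Real.pi) * σ) ^ d with hV
  have hd' : (0 : ℝ) < d := by exact_mod_cast hd
  have hr : 0 < σ * √d := by positivity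
  have hV0 : 0 ≤ V := by positivity
  obtain ⟨f, hfc, hf0, hf1, hlip, hz, ho⟩ := exists_base x hr
  have habs : ∀ y, |f y| ≤ 1 := fun y => abs_le.2 ⟨by linarith [hf0 y], hf1 y⟩
  have hm1 := memFdkG_moll hσ (inv_pos.2 hr).le hfc habs hlip hLσ
  have hm2 := memFdkG_moll (f := fun y => -f y) hσ (inv_pos.2 hr).le hfc.neg
    (fun y => by rw [abs_neg]; exact habs y)
    (fun y i t => by rw [neg_sub_neg, abs_sub_comm]; exact hlip y i t) hLσ
  have hneg : ∀ y, moll σ (fun y => -f y) 0 y = -moll σ f 0 y := by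
    intro y
    simp [moll_apply, integral_neg]
  have hx1 : ∀ i, moll σ f 0 (x i) = 0 := fun i =>
    moll_eq_of_forall hσ fun u hu => hz _ i (eDist_sub_self_le hσ.le _ u hu)
  have e1 := h _ hm1
  have e2 := h _ hm2
  simp only [hneg, hx1, neg_zero, integral_neg] at e1 e2
  have hle : ∫ z in D, moll σ f 0 z ≤ e := by
    rw [abs_le] at e1 e2
    linarith [e1.2, e2.1]
  let U : Set (Fin d → ℝ) := ⋃ i, {y | eDist y (x i) < 3 * (σ * √d)}
  have hUm : MeasurableSet U := by
    refine MeasurableSet.iUnion fun i => (isOpen_lt ?_ continuous_const).measurableSet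
    unfold eDist
    exact (PiLp.continuous_toLp 2 _).dist continuous_const
  have hUv : volume U ≤ ENNReal.ofReal (n * V) := by
    refine (measure_iUnion_le _).trans ?_
    rw [tsum_fintype]
    refine (Finset.sum_le_sum fun i _ => volume_eDist_ball_le hσ (x i)).trans ?_
    rw [← hV, Finset.sum_const, Finset.card_univ, Fintype.card_fin, nsmul_eq_mul,
      ENNReal.ofReal_mul (Nat.cast_nonneg n), ENNReal.ofReal_natCast]
  have hone : ∀ y ∈ D \ U, moll σ f 0 y = 1 := by
    intro y hy
    refine moll_eq_of_forall hσ fun u hu => ho _ fun i => ?_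
    have h1 : 3 * (σ * √d) ≤ eDist y (x i) := by
      by_contra hc
      exact hy.2 (mem_iUnion.2 ⟨i, not_le.1 hc⟩)
    have h2 := eDist_sub_self_le hσ.le y u hu
    have h3 : eDist y (x i) ≤ eDist (y - u) y + eDist (y - u) (x i) := dist_triangle_left _ _ _
    linarith
  have hDfin : volume D ≠ ⊤ := by rw [hD1]; exact ENNReal.one_ne_top
  have hint : IntegrableOn (moll σ f 0) D :=
    Measure.integrableOn_of_bounded hDfin
      (moll_contDiff hσ hfc 0).continuous.aestronglyMeasurable
      (Filter.Eventually.of_forall fun y => abs_moll_zero_le hσ habs y)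
  have hge : volume.real (D \ U) ≤ ∫ z in D, moll σ f 0 z := by
    calc volume.real (D \ U) = ∫ z in D \ U, moll σ f 0 z := by
          rw [setIntegral_congr_fun (hD.diff hUm) hone]; simp
      _ ≤ _ := setIntegral_mono_set hint
          (Filter.Eventually.of_forall fun y => moll_nonneg hσ hf0 y)
          (sdiff_subset.eventuallyLE)
  have hfin : volume U ≠ ⊤ := ne_top_of_le_ne_top ENNReal.ofReal_ne_top hUv
  have h5 : volume.real D ≤ volume.real (D \ U) + volume.real U := by
    have hcov : D ⊆ (D \ U) ∪ U := fun z hz => by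
      by_cases hzU : z ∈ U
      · exact Or.inr hzU
      · exact Or.inl ⟨hz, hzU⟩
    have hfin' : volume ((D \ U) ∪ U) ≠ ⊤ :=
      (measure_union_lt_top (lt_of_le_of_lt (measure_mono sdiff_subset) hDfin.lt_top)
        hfin.lt_top).ne
    exact (measureReal_mono hcov hfin').trans (measureReal_union_le _ _)
  have h6 : volume.real D = 1 := by simp [Measure.real, hD1]
  have h7 : volume.real U ≤ n * V :=
    ENNReal.toReal_le_of_le_ofReal (by positivity) hUv
  linarith

/-! ### Asymptotics -/

/-- With positive excess `a - a'` of the exponents, the factor `Q ^ d` is absorbed. -/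
lemma exists_absorb {Q a a' : ℝ} (hQ : 1 ≤ Q) (ha : a' < a) :
    ∃ c : ℝ, 0 < c ∧ ∀ d : ℕ, 1 ≤ d →
      c * (d : ℝ) ^ ((d : ℝ) * a') * (Q * (d : ℝ) ^ (-a)) ^ d ≤ 1 := by
  obtain ⟨N, hN⟩ := exists_nat_ge (Q ^ (a - a')⁻¹)
  have hη : 0 < a - a' := sub_pos.2 ha
  refine ⟨(Q ^ N)⁻¹, by positivity, fun d hd => ?_⟩
  have hd' : (1 : ℝ) ≤ d := by exact_mod_cast hd
  have hd0 : (0 : ℝ) < d := by linarith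
  have h1 : (d : ℝ) ^ ((d : ℝ) * a') * (Q * (d : ℝ) ^ (-a)) ^ d =
      (Q * (d : ℝ) ^ (-(a - a'))) ^ d := by
    rw [mul_comm (d : ℝ) a', Real.rpow_mul hd0.le, Real.rpow_natCast, ← mul_pow]
    congr 1
    rw [neg_sub, sub_eq_add_neg, Real.rpow_add hd0]
    ring
  rw [mul_assoc, h1, inv_mul_le_iff₀ (by positivity), mul_one]
  rcases le_total N d with h | h
  · have h2 : Q ≤ (d : ℝ) ^ (a - a') := by
      have h3 : Q ^ (a - a')⁻¹ ≤ d := hN.trans (by exact_mod_cast h)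
      rwa [Real.rpow_inv_le_iff_of_pos (by linarith) hd0.le hη] at h3
    have h4 : Q * (d : ℝ) ^ (-(a - a')) ≤ 1 := by
      rw [Real.rpow_neg hd0.le, ← div_eq_mul_inv]
      exact div_le_one_of_le₀ h2 (by positivity)
    exact (pow_le_one₀ (by positivity) h4).trans (one_le_pow₀ hQ)
  · have h4 : Q * (d : ℝ) ^ (-(a - a')) ≤ Q :=
      mul_le_of_le_one_right (by linarith)
        (Real.rpow_le_one_of_one_le_of_nonpos hd' (by linarith))
    exact (pow_le_pow_left₀ (by positivity) h4 d).trans (pow_le_pow_right₀ hQ h)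

/-- For `σ = M d^{-1/(2k)}` all derivative bounds hold. -/
lemma scale_ok {d k : ℕ} (hd : 1 ≤ d) (hk : 1 ≤ k) (j : ℕ) (hj : j < k) :
    (bumpM k * (d : ℝ) ^ (-(1 / (2 * k) : ℝ)) * √d)⁻¹ *
      (bumpM k * (bumpM k * (d : ℝ) ^ (-(1 / (2 * k) : ℝ)))⁻¹) ^ j ≤ 1 := by
  have hM := one_le_bumpM k
  have hM0 : 0 < bumpM k := by linarith
  have hd' : (1 : ℝ) ≤ d := by exact_mod_cast hd
  have hd0 : (0 : ℝ) < d := by linarith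
  have hk0 : (0 : ℝ) < k := by exact_mod_cast hk
  set w : ℝ := (d : ℝ) ^ (1 / (2 * k) : ℝ) with hw
  have hw1 : 1 ≤ w := Real.one_le_rpow hd' (by positivity)
  have hw0 : 0 < w := by linarith
  -- `d^{1/(2k)}` is a `k`-th root of `√d`
  have hwk : √d = w ^ k := by
    rw [Real.sqrt_eq_rpow, hw, ← Real.rpow_natCast, ← Real.rpow_mul hd0.le]
    congr 1
    field_simp
  rw [Real.rpow_neg hd0.le, ← hw, hwk]
  have h1 : bumpM k * (bumpM k * w⁻¹)⁻¹ = w := by field_simp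
  rw [h1, inv_mul_le_iff₀ (by positivity), mul_one]
  calc w ^ j ≤ w ^ (k - 1) := pow_le_pow_right₀ hw1 (by omega)
    _ = 1 * w⁻¹ * w ^ k := by
        obtain ⟨m, rfl⟩ : ∃ m, k = m + 1 := ⟨k - 1, by omega⟩
        rw [Nat.add_sub_cancel, pow_succ]
        field_simp
    _ ≤ bumpM k * w⁻¹ * w ^ k := by gcongr

/-- Hinrichs, Novak, Ullrich, Woźniakowski: the curse of dimensionality for `C^k`
functions, with a super-exponential lower bound.  There is `c_k > 0`, depending only
on `k`, such that for every `d`, every measurable `D_d ⊆ ℝ^d` of Lebesgue measure 1,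
and every `ε ∈ (0,1)`: whenever `n` function values suffice to achieve worst case
error at most `ε` on `F_d^k` (i.e. `e(n, F_d^k) ≤ ε`, expressed by the existence,
for each `δ > 0`, of an algorithm with worst case error `≤ ε + δ`), one has
`n ≥ c_k (1-ε) d^{d/(2k+3)}`. -/
theorem stmt18 (k : ℕ) (hk : 1 ≤ k) :
    ∃ c : ℝ, 0 < c ∧
      ∀ d : ℕ, 1 ≤ d → ∀ D : Set (Fin d → ℝ), MeasurableSet D → volume D = 1 →
        ∀ ε : ℝ, 0 < ε → ε < 1 → ∀ n : ℕ,
          (∀ δ : ℝ, 0 < δ →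
            ∃ (x : Fin n → Fin d → ℝ) (φ : (Fin n → ℝ) → ℝ),
              ∀ f : (Fin d → ℝ) → ℝ, memFdkG d k f →
                |(∫ z in D, f z) - φ (fun i => f (x i))| ≤ ε + δ) →
          c * (1 - ε) * (d : ℝ) ^ ((d : ℝ) / (2 * k + 3)) ≤ n := by
  have hM := one_le_bumpM k
  have hk0 : (0 : ℝ) < k := by exact_mod_cast hk
  have hQ : 1 ≤ Real.exp (1 / 2) * √(18 * Real.pi) * bumpM k := by
    have h1 : 1 ≤ Real.exp (1 / 2) := Real.one_le_exp (by norm_num)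
    have h2 : 1 ≤ √(18 * Real.pi) := Real.one_le_sqrt.2 (by linarith [Real.pi_gt_three])
    exact one_le_mul_of_one_le_of_one_le (one_le_mul_of_one_le_of_one_le h1 h2) hM
  obtain ⟨c, hc, hc1⟩ := exists_absorb (a := 1 / (2 * k)) (a' := 1 / (2 * k + 3)) hQ
    (one_div_lt_one_div_of_lt (by positivity) (by linarith))
  refine ⟨c, hc, fun d hd D hD hD1 ε _ _ n h => ?_⟩
  have hd0 : (0 : ℝ) < d := by exact_mod_cast hd
  set V : ℝ := (Real.exp (1 / 2) * √(18 * Real.pi) * bumpM k *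
    (d : ℝ) ^ (-(1 / (2 * k) : ℝ))) ^ d with hV
  have key : 1 - ε ≤ n * V := by
    refine le_of_forall_pos_le_add fun δ hδ => ?_
    obtain ⟨x, φ, hx⟩ := h δ hδ
    have h1 := one_sub_le_card_mul hd (σ := bumpM k * (d : ℝ) ^ (-(1 / (2 * k) : ℝ)))
      (by positivity) (scale_ok hd hk) hD hD1 x φ hx
    rw [← mul_assoc, ← hV] at h1
    linarith
  have h2 := hc1 d hd
  rw [← hV, mul_one_div] at h2
  set R : ℝ := (d : ℝ) ^ ((d : ℝ) / (2 * k + 3)) with hR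
  have hR0 : 0 < R := by positivity
  calc c * (1 - ε) * R = (c * R) * (1 - ε) := by ring
    _ ≤ (c * R) * (n * V) := by gcongr
    _ = n * (c * R * V) := by ring
    _ ≤ n * 1 := by gcongr
    _ = n := mul_one _
end
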